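/- There exists an absolute constant C such that for every odd prime p, every real K ≥ 1, and all nonempty sets A,B ⊆ F_p with 0 ∉ A, 0 ∉ B and |A+B| ≤ K|A|, one has E⁺(A^{−1}, B^{−1}) − K²|A|²|B|²/p ≤ C·( K^{5/4}|A|^{5/4}|B|^{3/2} + K²|A|² ). -/

import Mathlib

open Finset

/-- The sumset `A + B = {a + b : a ∈ A, b ∈ B}`. -/
def sumSet (p : ℕ) (A B : Finset (ZMod p)) : Finset (ZMod p) :=
  (A ×ˢ B).image fun x => x.1 + x.2

/-- The common additive energy: quadruples `(x₁,x₂,y₁,y₂) ∈ X²×Y²` with `x₁+y₁ = x₂+y₂`. -/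
def addEnergy2 (p : ℕ) (X Y : Finset (ZMod p)) : ℕ :=
  (((X ×ˢ X) ×ˢ Y ×ˢ Y).filter fun x => x.1.1 + x.2.1 = x.1.2 + x.2.2).card

/-!
Put `U = (A + B)⁻¹`. Since `(a⁻¹ + b⁻¹)⁻¹ = b - b² (a + b)⁻¹`, a coincidence
`a₁⁻¹ + b₁⁻¹ = a₂⁻¹ + b₂⁻¹` puts the point `((a₁ + b₁)⁻¹, (a₂ + b₂)⁻¹)` of the grid `U × U` on a
line determined by `(b₁, b₂)`, so the energy is controlled by incidences between about `|B|²` lines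
and `U × U`.

When `U` and `B` are large compared with `p`, the variance of the number of grid points on a random
line gives the bound. Otherwise, by Cauchy–Schwarz, it suffices to count the coincidences
`l₁(u₁) = l₂(u₂)`, and each of these is the meeting of two lines in 3-space, one from each of two
families. A projective transformation over `F(μ)` makes one family lie in distinct planes
`x = const` and the other in distinct planes `y = const`. Their incidences are then bounded as in
the theorems of Guth–Katz and Rudnev: if every line is rich, a polynomial of low degree vanishing on
a greedily chosen sample of one family vanishes on all lines of both, and a Bézout argument shows
that an irreducible factor contains only few lines of one family, or else that the first family lies
in one regulus, where the pencil bound applies.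
-/

section MvPolynomialBasics

open MvPolynomial

lemma finrank_restrictTotalDegree (σ K : Type*) [Fintype σ] [Field K] (N : ℕ) :
    Module.finrank K (restrictTotalDegree σ K N) =
      (N + Fintype.card σ).choose (Fintype.card σ) := by
  classical
  have support_eq : {n : σ →₀ ℕ | (n.sum fun _ e => e) ≤ N} =
      ((range (N + 1)).biUnion fun k => (univ : Finset σ).finsuppAntidiag k :
        Finset (σ →₀ ℕ)) := by
    ext n
    simp [mem_finsuppAntidiag, Finsupp.sum_fintype]
  have disjoint : Set.PairwiseDisjoint (range (N + 1) : Set ℕ)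
      fun k => (univ : Finset σ).finsuppAntidiag k := by
    intro a _ b _ hab
    refine disjoint_left.2 fun n ha hb => hab ?_
    exact (mem_finsuppAntidiag.1 ha).1.symm.trans (mem_finsuppAntidiag.1 hb).1
  calc Module.finrank K (restrictTotalDegree σ K N)
      = Nat.card {n : σ →₀ ℕ | (n.sum fun _ e => e) ≤ N} :=
        Module.finrank_eq_nat_card_basis (basisRestrictSupport K _)
    _ = ∑ k ∈ range (N + 1), (Fintype.card σ).multichoose k := by
        rw [support_eq, Nat.card_coe_set_eq, Set.ncard_coe_finset, card_biUnion disjoint]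
        simp only [card_finsuppAntidiag_nat_eq_multichoose, card_univ]
    _ = _ := Nat.sum_range_multichoose _ _

lemma six_mul_choose_three (N : ℕ) : 6 * (N + 3).choose 3 = (N + 1) * (N + 2) * (N + 3) := by
  have := Nat.ascFactorial_eq_factorial_mul_choose N 3
  simp only [Nat.ascFactorial] at this
  simp only [Nat.factorial] at this
  linarith

variable {σ R : Type*}

lemma totalDegree_pderiv_le [CommSemiring R] (i : σ) (f : MvPolynomial σ R) :
    (pderiv i f).totalDegree ≤ f.totalDegree - 1 := by
  refine Finset.sup_le fun m hm => ?_
  rw [mem_support_iff, coeff_pderiv] at hm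
  have mem : m + Finsupp.single i 1 ∈ f.support := mem_support_iff.2 (left_ne_zero_of_mul hm)
  have le := le_totalDegree mem
  rw [Finsupp.sum_add_index' (by simp) (by simp), Finsupp.sum_single_index rfl] at le
  omega

lemma derivation_aeval [Fintype σ] [CommSemiring R] {S : Type*} [CommSemiring S] [Algebra R S]
    (D : Derivation R S S) (g : σ → S) (f : MvPolynomial σ R) :
    D (aeval g f) = ∑ i, aeval g (pderiv i f) * D (g i) := by
  classical
  induction f using MvPolynomial.induction_on with
  | C a => simp
  | add p q hp hq => simp [hp, hq, add_mul, sum_add_distrib]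
  | mul_X p i hp =>
    have single : ∑ j, aeval g p * aeval g (pderiv j (X i : MvPolynomial σ R)) * D (g j) =
        aeval g p * D (g i) := by
      rw [sum_eq_single i (fun j _ hj => by simp [pderiv_X_of_ne hj.symm]) (by simp)]
      simp
    simp only [map_mul, aeval_X, Derivation.leibniz, smul_eq_mul, map_add, add_mul,
      sum_add_distrib, single, hp, mul_sum]
    exact congrArg _ (sum_congr rfl fun j _ => by ring)

lemma natDegree_aeval_le_totalDegree [CommSemiring R] {S : Type*} [CommSemiring S] [Algebra R S]
    (f : MvPolynomial σ R) (g : σ → Polynomial S) (hg : ∀ i, (g i).natDegree ≤ 1) :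
    (aeval g f).natDegree ≤ f.totalDegree := by
  have le := aeval_natDegree_le (MvPolynomial.map (algebraMap R S) f) (m := f.totalDegree) (n := 1)
    (Finset.sup_mono (support_map_subset _ _)) g hg
  rwa [aeval_map_algebraMap, mul_one] at le

lemma totalDegree_pos_of_irreducible [Field R] {f : MvPolynomial σ R} (hf : Irreducible f) :
    0 < f.totalDegree := by
  refine Nat.pos_of_ne_zero fun h => hf.not_isUnit ?_
  have ne : coeff 0 f ≠ 0 := fun h0 => hf.ne_zero (by
    rw [totalDegree_eq_zero_iff_eq_C.1 h, h0, C_0])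
  rw [totalDegree_eq_zero_iff_eq_C.1 h]
  exact (isUnit_iff_ne_zero.2 ne).map C

lemma not_dvd_of_totalDegree_lt [CommRing R] [IsDomain R] {f g : MvPolynomial σ R} (hg : g ≠ 0)
    (h : g.totalDegree < f.totalDegree) : ¬ f ∣ g := by
  rintro ⟨c, rfl⟩
  rw [totalDegree_mul_of_isDomain (left_ne_zero_of_mul hg) (right_ne_zero_of_mul hg)] at h
  omega

end MvPolynomialBasics

section Bezout

open MvPolynomial

variable {σ K : Type*} [Field K]

/-- The map `(a, b) ↦ f * a + g * b` on polynomials with `deg a ≤ m`, `deg b ≤ n`: its range is the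
part of the ideal `(f, g)` used to compare dimensions. -/
noncomputable def idealCombination (f g : MvPolynomial σ K) (m n : ℕ) :
    (restrictTotalDegree σ K m × restrictTotalDegree σ K n) →ₗ[K] MvPolynomial σ K :=
  ((LinearMap.mulLeft K f).domRestrict _).coprod ((LinearMap.mulLeft K g).domRestrict _)

lemma idealCombination_apply (f g : MvPolynomial σ K) (m n : ℕ)
    (x : restrictTotalDegree σ K m × restrictTotalDegree σ K n) :
    idealCombination f g m n x = f * x.1 + g * x.2 := rfl

lemma mul_mem_restrictTotalDegree {f a : MvPolynomial σ K} {n N : ℕ}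
    (ha : a ∈ restrictTotalDegree σ K n) (h : f.totalDegree + n ≤ N) :
    f * a ∈ restrictTotalDegree σ K N := by
  rw [mem_restrictTotalDegree] at ha ⊢
  exact (totalDegree_mul f a).trans (by omega)

lemma exists_of_idealCombination_eq_zero {f g : MvPolynomial σ K} (hf : Irreducible f)
    (hfg : ¬ f ∣ g) {m n : ℕ} {x : restrictTotalDegree σ K m × restrictTotalDegree σ K n}
    (hx : idealCombination f g m n x = 0) :
    ∃ c ∈ restrictTotalDegree σ K (n - f.totalDegree),
      (x.1 : MvPolynomial σ K) = -(g * c) ∧ (x.2 : MvPolynomial σ K) = f * c := by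
  rw [idealCombination_apply] at hx
  have hdvd : f ∣ g * x.2 := ⟨-x.1, by linear_combination hx⟩
  obtain ⟨c, hc⟩ := (hf.prime.dvd_or_dvd hdvd).resolve_left hfg
  refine ⟨c, (mem_restrictTotalDegree _ _ _).2 ?_, ?_, hc⟩
  · rcases eq_or_ne c 0 with rfl | hc0
    · simp
    have := (mem_restrictTotalDegree _ _ _).1 x.2.2
    rw [hc, totalDegree_mul_of_isDomain hf.ne_zero hc0] at this
    omega
  · rw [hc] at hx
    refine mul_left_cancel₀ hf.ne_zero ?_
    linear_combination hx

lemma finrank_ker_idealCombination_le [Finite σ] {f g : MvPolynomial σ K} (hf : Irreducible f)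
    (hfg : ¬ f ∣ g) (m n : ℕ) :
    Module.finrank K (LinearMap.ker (idealCombination f g m n)) ≤
      Module.finrank K (restrictTotalDegree σ K (n - f.totalDegree)) := by
  choose syzygy mem first second using fun x : LinearMap.ker (idealCombination f g m n) =>
    exists_of_idealCombination_eq_zero hf hfg (LinearMap.mem_ker.1 x.2)
  let quotient : LinearMap.ker (idealCombination f g m n) →ₗ[K]
      restrictTotalDegree σ K (n - f.totalDegree) :=
    { toFun := fun x => ⟨syzygy x, mem x⟩
      map_add' := fun x y => Subtype.ext <| mul_left_cancel₀ hf.ne_zero <| by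
        simp only [Submodule.coe_add, mul_add, ← second]
        rfl
      map_smul' := fun r x => Subtype.ext <| mul_left_cancel₀ hf.ne_zero <| by
        simp only [Submodule.coe_smul, mul_smul_comm, ← second, RingHom.id_apply]
        rfl }
  refine LinearMap.finrank_le_finrank_of_injective (f := quotient) fun x y hxy => ?_
  have hc : syzygy x = syzygy y := congrArg Subtype.val hxy
  refine Subtype.ext (Prod.ext (Subtype.ext ?_) (Subtype.ext ?_))
  · rw [first, first, hc]
  · rw [second, second, hc]

variable {ι : Type*}

-- Restricting `∑ cᵢₗ Xⱼⁱ Xⱼ'ˡ` to the lines gives a Vandermonde system for each fixed `l`.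
lemma eq_zero_of_sum_pow_mul_pow_eq_zero {s : Finset ι}
    {φ : ι → MvPolynomial σ K →ₐ[K] Polynomial K} {z : ι → K} (hz : Set.InjOn z s) {j j' : σ}
    (hj : ∀ i ∈ s, φ i (X j) = Polynomial.C (z i)) (hj' : ∀ i ∈ s, φ i (X j') = Polynomial.X)
    {k : ℕ} {c : Fin #s × Fin k → K}
    (hc : ∀ i ∈ s, φ i (∑ q, c q • (X j ^ (q.1 : ℕ) * X j' ^ (q.2 : ℕ))) = 0) : c = 0 := by
  classical
  let point (i : Fin #s) : K := z (s.equivFin.symm i)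
  have hpoint : Function.Injective point := fun a b hab =>
    s.equivFin.symm.injective <| Subtype.ext <|
      hz (s.equivFin.symm a).2 (s.equivFin.symm b).2 hab
  have vandermonde (l : Fin k) (i : Fin #s) : ∑ i', c (i', l) * point i ^ (i' : ℕ) = 0 := by
    have mem := (s.equivFin.symm i).2
    have h := congrArg (Polynomial.coeff · (l : ℕ)) (hc _ mem)
    simp only [map_sum, map_smul, map_mul, map_pow, hj _ mem, hj' _ mem] at h
    simp only [Polynomial.finsetSum_coeff, Polynomial.coeff_zero, Polynomial.coeff_smul,
      ← Polynomial.C_pow, Polynomial.coeff_C_mul, Polynomial.coeff_X_pow, smul_eq_mul] at h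
    simpa [Fintype.sum_prod_type, Fin.val_inj] using h
  ext ⟨i, l⟩
  exact congrFun (Matrix.eq_zero_of_forall_index_sum_mul_pow_eq_zero hpoint (vandermonde l)) i

lemma finrank_add_card_mul_le [Finite σ] {s : Finset ι}
    {φ : ι → MvPolynomial σ K →ₐ[K] Polynomial K} {z : ι → K} (hz : Set.InjOn z s) {j j' : σ}
    (hj : ∀ i ∈ s, φ i (X j) = Polynomial.C (z i)) (hj' : ∀ i ∈ s, φ i (X j') = Polynomial.X)
    {N : ℕ} {W : Submodule K (MvPolynomial σ K)} (hWN : W ≤ restrictTotalDegree σ K N)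
    (hW : ∀ i ∈ s, ∀ f ∈ W, φ i f = 0) :
    Module.finrank K W + #s * (N - #s) ≤ Module.finrank K (restrictTotalDegree σ K N) := by
  let monomials (q : Fin #s × Fin (N - #s)) : MvPolynomial σ K :=
    X j ^ (q.1 : ℕ) * X j' ^ (q.2 : ℕ)
  let Θ : (Fin #s × Fin (N - #s) → K) →ₗ[K] MvPolynomial σ K :=
    Fintype.linearCombination K monomials
  have range_le : LinearMap.range (W.subtype.coprod Θ) ≤ restrictTotalDegree σ K N := by
    rintro _ ⟨⟨f, c⟩, rfl⟩
    refine add_mem (hWN f.2) (sum_mem fun q _ => Submodule.smul_mem _ _ ?_)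
    rw [mem_restrictTotalDegree]
    refine (totalDegree_mul _ _).trans <|
      (add_le_add (totalDegree_pow _ _) (totalDegree_pow _ _)).trans ?_
    simp only [totalDegree_X, mul_one]
    have := q.1.2
    have := q.2.2
    omega
  have injective : Function.Injective (W.subtype.coprod Θ) := by
    rw [injective_iff_map_eq_zero]
    rintro ⟨f, c⟩ h
    have h : (f : MvPolynomial σ K) + ∑ q, c q • monomials q = 0 := h
    have hc : c = 0 := eq_zero_of_sum_pow_mul_pow_eq_zero hz hj hj' fun i hi => by
      rw [← zero_add (φ i _), ← hW i hi f f.2, ← map_add, h, map_zero, hW i hi f f.2]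
    subst hc
    simpa using h
  have : Module.Finite K W := Submodule.finiteDimensional_of_le hWN
  have := Submodule.finrank_mono range_le
  rwa [LinearMap.finrank_range_of_inj injective, Module.finrank_prod,
    Module.finrank_fintype_fun_eq_card, Fintype.card_prod, Fintype.card_fin,
    Fintype.card_fin] at this

lemma choose_three_second_difference_le (d e M : ℕ) :
    (M + d + e + 3).choose 3 + (M + 3).choose 3 ≤
      (M + e + 3).choose 3 + (M + d + 3).choose 3 + d * e * (M + d + e + 2) := by
  have h₁ := six_mul_choose_three (M + d + e)
  have h₂ := six_mul_choose_three M
  have h₃ := six_mul_choose_three (M + e)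
  have h₄ := six_mul_choose_three (M + d)
  have : 0 ≤ d * e * (d + e) := Nat.zero_le _
  refine Nat.le_of_mul_le_mul_left (?_ : 6 * _ ≤ 6 * _) (by norm_num)
  nlinarith

theorem card_lines_le_totalDegree_mul_totalDegree {f g : MvPolynomial (Fin 3) K}
    (hf : Irreducible f) (hfg : ¬ f ∣ g) {s : Finset ι}
    {φ : ι → MvPolynomial (Fin 3) K →ₐ[K] Polynomial K} {z : ι → K}
    (hz : Set.InjOn z s) {j j' : Fin 3}
    (hj : ∀ i ∈ s, φ i (X j) = Polynomial.C (z i)) (hj' : ∀ i ∈ s, φ i (X j') = Polynomial.X)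
    (hφf : ∀ i ∈ s, φ i f = 0) (hφg : ∀ i ∈ s, φ i g = 0) :
    #s ≤ f.totalDegree * g.totalDegree := by
  by_contra! hcon
  set d := f.totalDegree
  set e := g.totalDegree
  obtain ⟨M, hM⟩ : ∃ M, M = #s ^ 2 + 2 * d * e + #s + 1 := ⟨_, rfl⟩
  let combination := idealCombination f g (M + e) (M + d)
  let W := LinearMap.range combination
  have hWN : W ≤ restrictTotalDegree (Fin 3) K (M + d + e) := by
    rintro _ ⟨⟨a, b⟩, rfl⟩
    exact add_mem (mul_mem_restrictTotalDegree a.2 (by omega))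
      (mul_mem_restrictTotalDegree b.2 (by omega))
  have hW : ∀ i ∈ s, ∀ h ∈ W, φ i h = 0 := by
    rintro i hi _ ⟨x, rfl⟩
    simp [combination, idealCombination_apply, hφf i hi, hφg i hi]
  have upper := finrank_add_card_mul_le hz hj hj' hWN hW
  have rank_nullity : Module.finrank K W + Module.finrank K (LinearMap.ker combination) = _ :=
    LinearMap.finrank_range_add_finrank_ker combination
  have kernel : Module.finrank K (LinearMap.ker combination) ≤
      Module.finrank K (restrictTotalDegree (Fin 3) K (M + d - d)) :=
    finrank_ker_idealCombination_le hf hfg (M + e) (M + d)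
  rw [Nat.add_sub_cancel] at kernel
  simp only [Module.finrank_prod, finrank_restrictTotalDegree, Fintype.card_fin]
    at upper rank_nullity kernel
  have second_difference := choose_three_second_difference_le d e M
  have bound : #s * (M + d + e - #s) ≤ d * e * (M + d + e + 2) := by omega
  have split : #s * (M + d + e - #s) + #s * #s = #s * (M + d + e) := by
    rw [← mul_add, Nat.sub_add_cancel (by omega)]
  have : (d * e + 1) * (M + d + e) ≤ #s * (M + d + e) := Nat.mul_le_mul_right _ hcon
  nlinarith [bound]

end Bezout

/-- The data of a line in affine 3-space lying in a coordinate plane. Each datum encodes two lines: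
`x = level, z = slope * y + intercept` (see `xRestrict`) and `y = level, z = slope * x + intercept`
(see `yRestrict`). -/
@[ext]
structure LevelLine (K : Type*) where
  level : K
  slope : K
  intercept : K

namespace LevelLine

instance {K : Type*} [DecidableEq K] : DecidableEq (LevelLine K) :=
  fun _ _ => decidable_of_iff _ LevelLine.ext_iff.symm

open MvPolynomial

variable {K : Type*} [Field K]

/-- The height `z` along the line, as a polynomial in the free horizontal coordinate. -/
noncomputable def height (w : LevelLine K) : Polynomial K :=
  Polynomial.C w.slope * Polynomial.X + Polynomial.C w.intercept

/-- Restriction of polynomials to the line `x = level, z = slope * y + intercept`. -/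
noncomputable def xRestrict (w : LevelLine K) : MvPolynomial (Fin 3) K →ₐ[K] Polynomial K :=
  aeval ![Polynomial.C w.level, Polynomial.X, w.height]

/-- Restriction of polynomials to the line `y = level, z = slope * x + intercept`. -/
noncomputable def yRestrict (w : LevelLine K) : MvPolynomial (Fin 3) K →ₐ[K] Polynomial K :=
  aeval ![Polynomial.X, Polynomial.C w.level, w.height]

/-- One ruling of the quadric `z = a x y + b y + c x + d`: its lines in the planes `x = const`. -/
def regulus (a b c d : K) : Set (LevelLine K) :=
  {w | w.slope = a * w.level + b ∧ w.intercept = c * w.level + d}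

variable (w : LevelLine K)

@[simp] lemma xRestrict_X_zero : w.xRestrict (X 0) = Polynomial.C w.level := by simp [xRestrict]
@[simp] lemma xRestrict_X_one : w.xRestrict (X 1) = Polynomial.X := by simp [xRestrict]
@[simp] lemma xRestrict_X_two : w.xRestrict (X 2) = w.height := by simp [xRestrict]
@[simp] lemma yRestrict_X_zero : w.yRestrict (X 0) = Polynomial.X := by simp [yRestrict]
@[simp] lemma yRestrict_X_one : w.yRestrict (X 1) = Polynomial.C w.level := by simp [yRestrict]
@[simp] lemma yRestrict_X_two : w.yRestrict (X 2) = w.height := by simp [yRestrict]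

@[simp] lemma xRestrict_C (c : K) : w.xRestrict (C c) = Polynomial.C c := w.xRestrict.commutes c
@[simp] lemma yRestrict_C (c : K) : w.yRestrict (C c) = Polynomial.C c := w.yRestrict.commutes c

lemma derivative_xRestrict (g : MvPolynomial (Fin 3) K) :
    Polynomial.derivative (w.xRestrict g) =
      w.xRestrict (pderiv 1 g) + Polynomial.C w.slope * w.xRestrict (pderiv 2 g) := by
  have chain := derivation_aeval (Polynomial.derivative' (R := K))
    ![Polynomial.C w.level, Polynomial.X, w.height] g
  simp only [Fin.sum_univ_three, Matrix.cons_val_zero, Matrix.cons_val_one, Matrix.cons_val,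
    Polynomial.derivative'_apply, height, Polynomial.derivative_C, Polynomial.derivative_X,
    Polynomial.derivative_add, Polynomial.derivative_C_mul] at chain
  rw [xRestrict, height, chain]
  ring

end LevelLine

section TangentDirection

open MvPolynomial

variable {K : Type*} [Field K]

/-- The derivative in the direction `(0, f_z, -f_y)`, tangent both to the level surfaces of `f` and
to the planes `x = const`. -/
noncomputable def tangentDerivation (f : MvPolynomial (Fin 3) K) :
    Derivation K (MvPolynomial (Fin 3) K) (MvPolynomial (Fin 3) K) :=
  pderiv 2 f • pderiv 1 - pderiv 1 f • pderiv 2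

/-- The planar analogue of Salmon's flecnode polynomial: it vanishes where the tangent line to
`f = 0` in the plane `x = const` has contact of second order with the surface. -/
noncomputable def flecnode (f : MvPolynomial (Fin 3) K) : MvPolynomial (Fin 3) K :=
  pderiv 1 f * tangentDerivation f (pderiv 2 f) - pderiv 2 f * tangentDerivation f (pderiv 1 f)

/-- The polynomial `t ↦ f(x, y + t f_z, z - t f_y)`: the restriction of `f` to the tangent line at a
generic point in the plane `x = const`. -/
noncomputable def tangentFlow (f : MvPolynomial (Fin 3) K) :
    Polynomial (MvPolynomial (Fin 3) K) :=
  aeval ![Polynomial.C (X 0),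
    Polynomial.C (X 1) + Polynomial.C (pderiv 2 f) * Polynomial.X,
    Polynomial.C (X 2) - Polynomial.C (pderiv 1 f) * Polynomial.X] f

variable (f : MvPolynomial (Fin 3) K)

lemma tangentDerivation_apply (g : MvPolynomial (Fin 3) K) :
    tangentDerivation f g = pderiv 2 f * pderiv 1 g - pderiv 1 f * pderiv 2 g := by
  simp [tangentDerivation]

lemma tangentDerivation_self : tangentDerivation f f = 0 := by
  rw [tangentDerivation_apply, mul_comm, sub_self]

lemma totalDegree_tangentDerivation_le (g : MvPolynomial (Fin 3) K) :
    (tangentDerivation f g).totalDegree ≤ f.totalDegree + g.totalDegree := by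
  have := totalDegree_pderiv_le 1 f
  have := totalDegree_pderiv_le 2 f
  have := totalDegree_pderiv_le 1 g
  have := totalDegree_pderiv_le 2 g
  rw [tangentDerivation_apply]
  exact (totalDegree_sub _ _).trans <| max_le ((totalDegree_mul _ _).trans (by omega))
    ((totalDegree_mul _ _).trans (by omega))

lemma totalDegree_flecnode_le : (flecnode f).totalDegree ≤ 3 * f.totalDegree := by
  have := totalDegree_pderiv_le 1 f
  have := totalDegree_pderiv_le 2 f
  have := totalDegree_tangentDerivation_le f (pderiv 1 f)
  have := totalDegree_tangentDerivation_le f (pderiv 2 f)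
  exact (totalDegree_sub _ _).trans <| max_le ((totalDegree_mul _ _).trans (by omega))
    ((totalDegree_mul _ _).trans (by omega))

variable {f}

lemma LevelLine.xRestrict_flecnode {w : LevelLine K} (hw : w.xRestrict f = 0) :
    w.xRestrict (flecnode f) = 0 := by
  have first_order := w.derivative_xRestrict f
  rw [hw, Polynomial.derivative_zero] at first_order
  have tangency : w.xRestrict (pderiv 1 f) =
      -(Polynomial.C w.slope * w.xRestrict (pderiv 2 f)) := by
    linear_combination -first_order
  have second_order := congrArg Polynomial.derivative tangency
  rw [Polynomial.derivative_neg, Polynomial.derivative_C_mul, derivative_xRestrict,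
    derivative_xRestrict] at second_order
  simp only [flecnode, tangentDerivation_apply, map_sub, map_mul, tangency]
  linear_combination -(w.xRestrict (pderiv 2 f)) ^ 2 * second_order

lemma algHom_tangentFlow {L : Type*} [CommRing L] [Algebra K L]
    (Ψ : Polynomial (MvPolynomial (Fin 3) K) →ₐ[K] L) (f : MvPolynomial (Fin 3) K) :
    Ψ (tangentFlow f) = aeval ![Ψ (Polynomial.C (X 0)),
      Ψ (Polynomial.C (X 1)) + Ψ (Polynomial.C (pderiv 2 f)) * Ψ Polynomial.X,
      Ψ (Polynomial.C (X 2)) - Ψ (Polynomial.C (pderiv 1 f)) * Ψ Polynomial.X] f := by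
  rw [tangentFlow, ← AlgHom.comp_apply, comp_aeval]
  congr 2
  ext i
  fin_cases i <;> simp

lemma coeff_zero_tangentFlow (f : MvPolynomial (Fin 3) K) : (tangentFlow f).coeff 0 = f := by
  have h := algHom_tangentFlow
    ((Polynomial.aeval (0 : MvPolynomial (Fin 3) K)).restrictScalars K) f
  simp only [AlgHom.coe_restrictScalars', Polynomial.aeval_C, Polynomial.aeval_X, mul_zero,
    add_zero, sub_zero, Algebra.algebraMap_self, RingHom.id_apply] at h
  rw [Polynomial.coeff_zero_eq_eval_zero, ← Polynomial.coe_aeval_eq_eval, h]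
  conv_rhs => rw [← aeval_X_left_apply f]
  congr 2
  ext i
  fin_cases i <;> simp

lemma natDegree_tangentFlow_le (f : MvPolynomial (Fin 3) K) :
    (tangentFlow f).natDegree ≤ f.totalDegree := by
  have natDegree_C_mul_X_le (c : MvPolynomial (Fin 3) K) :
      (Polynomial.C c * Polynomial.X).natDegree ≤ 1 :=
    (Polynomial.natDegree_C_mul_le _ _).trans Polynomial.natDegree_X_le
  refine natDegree_aeval_le_totalDegree f _ fun i => ?_
  fin_cases i
  · simp
  · simp only [Fin.mk_one, Matrix.cons_val_one]
    exact Polynomial.natDegree_add_le_of_degree_le (by simp) (natDegree_C_mul_X_le _)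
  · simp only [Fin.reduceFinMk, Matrix.cons_val]
    exact (Polynomial.natDegree_sub_le _ _).trans (max_le (by simp) (natDegree_C_mul_X_le _))

/-- A derivation of `A` applied to each coefficient of a polynomial over `A`. -/
noncomputable def coeffwise {A : Type*} [CommRing A] [Algebra K A] (D : Derivation K A A) :
    Derivation K (Polynomial A) (Polynomial A) :=
  (PolynomialModule.equivPolynomialSelf (R := A)).toLinearMap.compDer D.mapCoeffs

section Coeffwise

variable {A : Type*} [CommRing A] [Algebra K A] (D : Derivation K A A)

lemma coeff_coeffwise (q : Polynomial A) (n : ℕ) : (coeffwise D q).coeff n = D (q.coeff n) := rfl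

lemma coeffwise_C (a : A) : coeffwise D (Polynomial.C a) = Polynomial.C (D a) := by
  ext n
  rw [coeff_coeffwise, Polynomial.coeff_C, Polynomial.coeff_C]
  split_ifs <;> simp

lemma coeffwise_X : coeffwise D Polynomial.X = 0 := by
  ext n
  rw [coeff_coeffwise, Polynomial.coeff_X]
  split_ifs <;> simp

end Coeffwise

-- Modulo the flecnode polynomial, `tangentFlow f` satisfies a transport equation in `t`.
lemma tangentFlow_transport (f : MvPolynomial (Fin 3) K) :
    Polynomial.C (flecnode f) ∣
      Polynomial.C (pderiv 2 f) * coeffwise (tangentDerivation f) (tangentFlow f) -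
        (Polynomial.C (pderiv 2 f) * Polynomial.derivative (tangentFlow f) +
          Polynomial.C (tangentDerivation f (pderiv 2 f)) *
            (Polynomial.derivative (tangentFlow f) * Polynomial.X)) := by
  set g : Fin 3 → Polynomial (MvPolynomial (Fin 3) K) := ![Polynomial.C (X 0),
    Polynomial.C (X 1) + Polynomial.C (pderiv 2 f) * Polynomial.X,
    Polynomial.C (X 2) - Polynomial.C (pderiv 1 f) * Polynomial.X] with hg
  have tangentFlow_eq : tangentFlow f = aeval g f := rfl
  have along_surface : coeffwise (tangentDerivation f) (tangentFlow f) =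
      aeval g (pderiv 1 f) * (Polynomial.C (pderiv 2 f) +
        Polynomial.C (tangentDerivation f (pderiv 2 f)) * Polynomial.X) -
      aeval g (pderiv 2 f) * (Polynomial.C (pderiv 1 f) +
        Polynomial.C (tangentDerivation f (pderiv 1 f)) * Polynomial.X) := by
    have hx : tangentDerivation f (X 0) = 0 := by simp [tangentDerivation_apply]
    have hy : tangentDerivation f (X 1) = pderiv 2 f := by simp [tangentDerivation_apply]
    have hz : tangentDerivation f (X 2) = -pderiv 1 f := by simp [tangentDerivation_apply]
    rw [tangentFlow_eq, derivation_aeval, Fin.sum_univ_three]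
    simp only [hg, Matrix.cons_val_zero, Matrix.cons_val_one, Matrix.cons_val, coeffwise_C,
      coeffwise_X, hx, hy, hz, map_add, map_sub, Derivation.leibniz, smul_eq_mul, map_zero, map_neg]
    ring
  have in_time : Polynomial.derivative (tangentFlow f) =
      aeval g (pderiv 1 f) * Polynomial.C (pderiv 2 f) -
        aeval g (pderiv 2 f) * Polynomial.C (pderiv 1 f) := by
    have chain := derivation_aeval
      ((Polynomial.derivative' (R := MvPolynomial (Fin 3) K)).restrictScalars K) g f
    rw [Fin.sum_univ_three] at chain
    simp only [hg, Matrix.cons_val_zero, Matrix.cons_val_one, Matrix.cons_val,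
      Derivation.restrictScalars_apply, Polynomial.derivative'_apply, Polynomial.derivative_add,
      Polynomial.derivative_sub, Polynomial.derivative_C, Polynomial.derivative_C_mul,
      Polynomial.derivative_X] at chain
    rw [tangentFlow_eq, hg, chain]
    ring
  refine ⟨Polynomial.X * aeval g (pderiv 2 f), ?_⟩
  rw [along_surface, in_time, flecnode]
  simp only [map_sub, map_mul]
  ring

lemma flecnode_dvd_coeff_tangentFlow_recurrence (f : MvPolynomial (Fin 3) K) (k : ℕ) :
    flecnode f ∣ pderiv 2 f * tangentDerivation f ((tangentFlow f).coeff k) -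
      (pderiv 2 f * ((k + 1 : ℕ) * (tangentFlow f).coeff (k + 1)) +
        tangentDerivation f (pderiv 2 f) * (k * (tangentFlow f).coeff k)) := by
  have h := (Polynomial.C_dvd_iff_dvd_coeff _ _).1 (tangentFlow_transport f) k
  have coeff_derivative_mul_X : (Polynomial.derivative (tangentFlow f) * Polynomial.X).coeff k =
      k * (tangentFlow f).coeff k := by
    cases k with
    | zero => simp
    | succ k =>
      rw [Polynomial.coeff_mul_X, Polynomial.coeff_derivative]
      push_cast
      ring
  rw [Polynomial.coeff_sub, Polynomial.coeff_add, Polynomial.coeff_C_mul, Polynomial.coeff_C_mul,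
    Polynomial.coeff_C_mul, coeff_derivative_mul_X, Polynomial.coeff_derivative,
    coeff_coeffwise] at h
  rwa [Nat.cast_add_one, mul_comm ((k : MvPolynomial (Fin 3) K) + 1)]

lemma isUnit_natCast_of_lt_char {σ : Type*} {p : ℕ} [CharP K p] {k : ℕ} (hk : k ≠ 0)
    (hkp : k < p) : IsUnit (k : MvPolynomial σ K) := by
  rw [← map_natCast (C : K →+* MvPolynomial σ K)]
  refine (isUnit_iff_ne_zero.2 fun h => ?_).map _
  exact hkp.not_ge (Nat.le_of_dvd (Nat.pos_of_ne_zero hk) ((CharP.cast_eq_zero_iff K p k).1 h))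

lemma C_dvd_tangentFlow {p : ℕ} [CharP K p] (hf : Irreducible f) (hfp : f.totalDegree < p)
    (hflec : f ∣ flecnode f) (hfz : ¬ f ∣ pderiv 2 f) : Polynomial.C f ∣ tangentFlow f := by
  refine (Polynomial.C_dvd_iff_dvd_coeff _ _).2 fun k => ?_
  rcases le_or_gt p k with hpk | hkp
  · rw [Polynomial.coeff_eq_zero_of_natDegree_lt
      ((natDegree_tangentFlow_le f).trans_lt (hfp.trans_le hpk))]
    exact dvd_zero _
  induction k with
  | zero => rw [coeff_zero_tangentFlow]
  | succ k ih =>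
    have coeff_dvd := ih (by omega)
    have derivation_dvd : f ∣ tangentDerivation f ((tangentFlow f).coeff k) := by
      obtain ⟨c, hc⟩ := coeff_dvd
      simp [hc, Derivation.leibniz, tangentDerivation_self]
    have product_dvd : f ∣ pderiv 2 f * ((k + 1 : ℕ) * (tangentFlow f).coeff (k + 1)) := by
      have recurrence := hflec.trans (flecnode_dvd_coeff_tangentFlow_recurrence f k)
      rw [dvd_sub_right (derivation_dvd.mul_left _)] at recurrence
      exact (dvd_add_left ((coeff_dvd.mul_left _).mul_left _)).1 recurrence
    exact (isUnit_natCast_of_lt_char k.succ_ne_zero hkp).dvd_mul_left.1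
      ((hf.prime.dvd_or_dvd product_dvd).resolve_left hfz)

end TangentDirection

section Cylinders

open MvPolynomial

variable {σ K : Type*} [Field K]

lemma notMem_vars_of_pderiv_eq_zero {p : ℕ} [CharP K p] {f : MvPolynomial σ K}
    (hfp : f.totalDegree < p) {i : σ} (h : pderiv i f = 0) : i ∉ f.vars := by
  rw [mem_vars_iff_mem_support]
  rintro ⟨m, hm, hmi⟩
  have pos : m i ≠ 0 := Finsupp.mem_support_iff.1 hmi
  have lt : m i < p :=
    ((Finset.single_le_sum (fun _ _ => Nat.zero_le _) hmi).trans (le_totalDegree hm)).trans_lt hfp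
  have restore : m - Finsupp.single i 1 + Finsupp.single i 1 = m :=
    tsub_add_cancel_of_le (Finsupp.single_le_iff.2 (by omega))
  have hcoeff := congrArg (coeff (m - Finsupp.single i 1)) h
  rw [coeff_pderiv, restore, coeff_zero, ← Nat.cast_add_one, Finsupp.tsub_apply,
    Finsupp.single_eq_same, Nat.sub_add_cancel (by omega)] at hcoeff
  have char_dvd := (CharP.cast_eq_zero_iff K p _).1
    ((mul_eq_zero.1 hcoeff).resolve_left (mem_support_iff.1 hm))
  exact lt.not_ge (Nat.le_of_dvd (by omega) char_dvd)

lemma X_sub_C_dvd_sub_aeval_update [DecidableEq σ] (i : σ) (c : K) (f : MvPolynomial σ K) :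
    X i - C c ∣ f - aeval (Function.update X i (C c)) f := by
  rw [← Ideal.mem_span_singleton, ← Ideal.Quotient.mk_eq_mk_iff_sub_mem]
  change Ideal.Quotient.mkₐ K _ f = ((Ideal.Quotient.mkₐ K _).comp (aeval _)) f
  congr 1
  ext j
  rw [AlgHom.comp_apply, aeval_X]
  rcases eq_or_ne j i with rfl | hj
  · rw [Function.update_self]
    exact (Ideal.Quotient.mk_eq_mk_iff_sub_mem _ _).2 (Ideal.mem_span_singleton_self _)
  · rw [Function.update_of_ne hj]

lemma pderiv_eq_zero_of_dvd {f : MvPolynomial σ K} (hf : 0 < f.totalDegree) {i : σ}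
    (h : f ∣ pderiv i f) : pderiv i f = 0 := by
  by_contra hne
  have := totalDegree_pderiv_le i f
  exact not_dvd_of_totalDegree_lt hne (by omega) h

lemma LevelLine.X_sub_C_dvd_of_yRestrict_eq_zero {f : MvPolynomial (Fin 3) K}
    (hz : (2 : Fin 3) ∉ f.vars) {w : LevelLine K} (hw : w.yRestrict f = 0) :
    X 1 - C w.level ∣ f := by
  have vanish : aeval (Function.update X 1 (C w.level)) f = (0 : MvPolynomial (Fin 3) K) := by
    rw [← map_zero (Polynomial.aeval (R := K) (X 0 : MvPolynomial (Fin 3) K)), ← hw]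
    refine hom_congr_vars (f₁ := (aeval _ : MvPolynomial (Fin 3) K →ₐ[K] _).toRingHom)
      (f₂ := ((Polynomial.aeval (X 0 : MvPolynomial (Fin 3) K)).comp w.yRestrict).toRingHom)
      (by ext; simp [MvPolynomial.algebraMap_eq]) (fun i hi _ => ?_) rfl
    fin_cases i
    · simp
    · simp [MvPolynomial.algebraMap_eq]
    · exact absurd hi hz
  rw [← sub_zero f, ← vanish]
  exact X_sub_C_dvd_sub_aeval_update 1 w.level f

lemma LevelLine.level_eq_of_dvd_pderiv {p : ℕ} [CharP K p] {f : MvPolynomial (Fin 3) K}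
    (hf : Irreducible f) (hfp : f.totalDegree < p) (hfz : f ∣ pderiv 2 f)
    {w w' : LevelLine K} (hw : w.yRestrict f = 0) (hw' : w'.yRestrict f = 0) :
    w.level = w'.level := by
  have hvars := notMem_vars_of_pderiv_eq_zero hfp
    (pderiv_eq_zero_of_dvd (totalDegree_pos_of_irreducible hf) hfz)
  have not_unit : ¬ IsUnit (X 1 - C w.level : MvPolynomial (Fin 3) K) := fun h => by
    simpa using h.map w.yRestrict
  have associated :=
    (hf.dvd_iff.1 (X_sub_C_dvd_of_yRestrict_eq_zero hvars hw)).resolve_left not_unit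
  have hlevel : w'.yRestrict (X 1 - C w.level) = 0 := by
    obtain ⟨u, hu⟩ := associated
    rw [← hu, map_mul, hw', zero_mul]
  rw [map_sub, yRestrict_X_one, yRestrict_C, sub_eq_zero] at hlevel
  exact (Polynomial.C_injective hlevel).symm

end Cylinders

section RuledSurfaces

open MvPolynomial

variable {K : Type*} [Field K]

/-- A polynomial in one variable, regarded as a polynomial in the first coordinate `x`. -/
noncomputable def inX : Polynomial K →ₐ[K] MvPolynomial (Fin 3) K := Polynomial.aeval (X 0)

lemma inX_X : inX (Polynomial.X : Polynomial K) = X 0 := by simp [inX]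

lemma inX_C (c : K) : inX (Polynomial.C c) = C c := by simp [inX, MvPolynomial.algebraMap_eq]

lemma dvd_pow_mul_of_localization_eq_zero {R : Type*} [CommRing R] {G a f : R}
    (h : algebraMap (R ⧸ Ideal.span {G})
      (Localization.Away (Ideal.Quotient.mk (Ideal.span {G}) a)) (Ideal.Quotient.mk _ f) = 0) :
    ∃ N : ℕ, G ∣ a ^ N * f := by
  rw [IsLocalization.map_eq_zero_iff (Submonoid.powers (Ideal.Quotient.mk (Ideal.span {G}) a))] at h
  obtain ⟨⟨_, N, rfl⟩, hN⟩ := h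
  refine ⟨N, Ideal.mem_span_singleton.1 (Ideal.Quotient.eq_zero_iff_mem.1 ?_)⟩
  rw [map_mul, map_pow]
  exact hN

namespace LevelLine

lemma yRestrict_inX (w : LevelLine K) (q : Polynomial K) : w.yRestrict (inX q) = q := by
  rw [inX, ← Polynomial.aeval_algHom_apply, yRestrict_X_zero, Polynomial.aeval_X_left_apply]

lemma xRestrict_inX (w : LevelLine K) (q : Polynomial K) :
    w.xRestrict (inX q) = Polynomial.C (q.eval w.level) := by
  rw [inX, ← Polynomial.aeval_algHom_apply, xRestrict_X_zero, ← Polynomial.algebraMap_eq,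
    Polynomial.aeval_algebraMap_apply_eq_algebraMap_eval]

/-- The equation of the surface swept out by the tangent lines of `f = 0` in the planes `x = const`
at the points of the line `w`. -/
noncomputable def tangentRuled (w : LevelLine K) (f : MvPolynomial (Fin 3) K) :
    MvPolynomial (Fin 3) K :=
  inX (w.yRestrict (pderiv 2 f)) * (X 2 - inX w.height) +
    inX (w.yRestrict (pderiv 1 f)) * (X 1 - C w.level)

variable {f : MvPolynomial (Fin 3) K} {w : LevelLine K}

lemma yRestrict_tangentRuled : w.yRestrict (w.tangentRuled f) = 0 := by
  simp [tangentRuled, yRestrict_inX]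

-- Where `a = f_z|_w` is invertible, a zero of `tangentRuled` is the point at time
-- `(y - level) / a` on the tangent line through a point of `w`.
lemma algHom_eq_zero_of_tangentRuled {L : Type*} [CommRing L] [Algebra K L]
    (hflow : Polynomial.C f ∣ tangentFlow f) (hw : w.yRestrict f = 0)
    (θ : MvPolynomial (Fin 3) K →ₐ[K] L) (hθ : θ (w.tangentRuled f) = 0)
    (hunit : IsUnit (θ (inX (w.yRestrict (pderiv 2 f))))) : θ f = 0 := by
  obtain ⟨b, hb⟩ := hunit.exists_right_inv
  let onLine : MvPolynomial (Fin 3) K →ₐ[K] L := (θ.comp inX).comp w.yRestrict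
  let Ψ : Polynomial (MvPolynomial (Fin 3) K) →ₐ[K] L :=
    Polynomial.eval₂AlgHom onLine (θ (X 1 - C w.level) * b) fun _ => Commute.all _ _
  have Ψ_C (g : MvPolynomial (Fin 3) K) : Ψ (Polynomial.C g) = θ (inX (w.yRestrict g)) :=
    Polynomial.eval₂_C _ _
  have Ψ_X : Ψ Polynomial.X = θ (X 1 - C w.level) * b := Polynomial.eval₂_X _ _
  have Ψ_flow : Ψ (tangentFlow f) = 0 := by
    obtain ⟨q, hq⟩ := hflow
    rw [hq, map_mul, Ψ_C, hw, map_zero, map_zero, zero_mul]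
  rw [algHom_tangentFlow] at Ψ_flow
  simp only [tangentRuled, map_add, map_mul, map_sub] at hθ
  rw [← Ψ_flow]
  refine DFunLike.congr_fun (algHom_ext fun i => ?_) f
  rw [aeval_X]
  fin_cases i
  · simp [Ψ_C, inX_X]
  · simp only [Fin.mk_one, Matrix.cons_val_one, Matrix.cons_val_zero, Ψ_C, Ψ_X, yRestrict_X_one,
      inX_C, map_sub]
    linear_combination (-(θ (X 1) - θ (C w.level))) * hb
  · simp only [Fin.reduceFinMk, Matrix.cons_val, Ψ_C, Ψ_X, yRestrict_X_two, map_sub]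
    linear_combination (-(θ (X 2) - θ (inX w.height))) * hb + b * hθ

lemma dvd_tangentRuled (hf : Irreducible f) (hflow : Polynomial.C f ∣ tangentFlow f)
    (hw : w.yRestrict f = 0) (hfz : w.yRestrict (pderiv 2 f) ≠ 0) : f ∣ w.tangentRuled f := by
  set a := w.yRestrict (pderiv 2 f)
  set G := w.tangentRuled f
  let mk := Ideal.Quotient.mkₐ K (Ideal.span {G})
  let θ := (IsScalarTower.toAlgHom K _ (Localization.Away (mk (inX a)))).comp mk
  have θ_G : θ G = 0 := by
    have : mk G = 0 := Ideal.Quotient.eq_zero_iff_mem.2 (Ideal.mem_span_singleton_self G)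
    simp [θ, this]
  have θ_f : θ f = 0 := algHom_eq_zero_of_tangentRuled hflow hw θ θ_G
    (IsLocalization.Away.algebraMap_isUnit (mk (inX a)))
  obtain ⟨N, q, hq⟩ := dvd_pow_mul_of_localization_eq_zero θ_f
  have f_dvd : f ∣ G * q := ⟨inX a ^ N, by rw [← hq, mul_comm]⟩
  refine (hf.prime.dvd_or_dvd f_dvd).resolve_right ?_
  rintro ⟨r, rfl⟩
  have inX_pow : inX a ^ N = G * r := mul_left_cancel₀ hf.ne_zero (by linear_combination hq)
  have a_pow := congrArg w.yRestrict inX_pow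
  rw [map_mul, yRestrict_tangentRuled, zero_mul, map_pow, yRestrict_inX] at a_pow
  exact hfz (eq_zero_of_pow_eq_zero a_pow)

/-- The equation of the quadric swept out by the lines in the planes `x = const` that meet the two
lines `y = const` encoded by `w` and `w'`. -/
noncomputable def transversalQuadric (w w' : LevelLine K) : MvPolynomial (Fin 3) K :=
  C (w'.level - w.level) * (X 2 - inX w.height) - inX (w'.height - w.height) * (X 1 - C w.level)

lemma dvd_transversalQuadric (hf : Irreducible f) (hflow : Polynomial.C f ∣ tangentFlow f)
    (hw : w.yRestrict f = 0) (hfz : w.yRestrict (pderiv 2 f) ≠ 0) {w' : LevelLine K}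
    (hw' : w'.yRestrict f = 0) : f ∣ transversalQuadric w w' := by
  have ruled_dvd := dvd_tangentRuled hf hflow hw hfz
  have on_w' : w.yRestrict (pderiv 2 f) * (w'.height - w.height) +
      w.yRestrict (pderiv 1 f) * Polynomial.C (w'.level - w.level) = 0 := by
    obtain ⟨q, hq⟩ := ruled_dvd
    have := congrArg w'.yRestrict hq
    rw [map_mul, hw', zero_mul] at this
    simpa [tangentRuled, yRestrict_inX] using this
  have product_dvd : f ∣ inX (w.yRestrict (pderiv 2 f)) * transversalQuadric w w' := by
    have elimination := congrArg inX on_w'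
    rw [map_add, map_mul, map_mul, inX_C, map_zero] at elimination
    convert ruled_dvd.mul_left (C (w'.level - w.level)) using 1
    rw [transversalQuadric, tangentRuled]
    linear_combination (-(X 1 - C w.level)) * elimination
  refine (hf.prime.dvd_or_dvd product_dvd).resolve_left ?_
  rintro ⟨q, hq⟩
  have := congrArg w.yRestrict hq
  rw [yRestrict_inX, map_mul, hw, zero_mul] at this
  exact hfz this

lemma mem_regulus_of_xRestrict_transversalQuadric {w' u : LevelLine K}
    (hne : w'.level ≠ w.level) (hu : u.xRestrict (transversalQuadric w w') = 0) :
    u ∈ regulus ((w'.slope - w.slope) / (w'.level - w.level))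
      ((w'.intercept - w.intercept) / (w'.level - w.level))
      (w.slope - (w'.slope - w.slope) / (w'.level - w.level) * w.level)
      (w.intercept - (w'.intercept - w.intercept) / (w'.level - w.level) * w.level) := by
  have hne := sub_ne_zero.2 hne
  have at_zero := congrArg (Polynomial.eval 0) hu
  have at_one := congrArg (Polynomial.eval 1) hu
  simp only [transversalQuadric, map_sub, map_mul, xRestrict_inX, xRestrict_C, xRestrict_X_one,
    xRestrict_X_two, height, Polynomial.eval_sub, Polynomial.eval_add, Polynomial.eval_mul,
    Polynomial.eval_C, Polynomial.eval_X, Polynomial.eval_zero] at at_zero at_one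
  constructor
  · field_simp
    linear_combination at_one - at_zero
  · field_simp
    linear_combination at_zero

variable {S T : Finset (LevelLine K)}

lemma card_le_three_mul_sq_of_not_dvd_flecnode (hf : Irreducible f) (hflec : ¬ f ∣ flecnode f)
    (hS : Set.InjOn level (S : Set (LevelLine K))) (hSf : ∀ w ∈ S, w.xRestrict f = 0) :
    #S ≤ 3 * f.totalDegree ^ 2 :=
  calc #S ≤ f.totalDegree * (flecnode f).totalDegree :=
        card_lines_le_totalDegree_mul_totalDegree hf hflec hS (j := 0) (j' := 1)
          (fun w _ => w.xRestrict_X_zero) (fun w _ => w.xRestrict_X_one) hSf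
          fun w hw => xRestrict_flecnode (hSf w hw)
    _ ≤ f.totalDegree * (3 * f.totalDegree) := by gcongr; exact totalDegree_flecnode_le f
    _ = 3 * f.totalDegree ^ 2 := by ring

lemma card_le_sq_of_yRestrict_pderiv_eq_zero (hf : Irreducible f) (hfz : ¬ f ∣ pderiv 2 f)
    (hT : Set.InjOn level (T : Set (LevelLine K))) (hTf : ∀ w ∈ T, w.yRestrict f = 0)
    (hTfz : ∀ w ∈ T, w.yRestrict (pderiv 2 f) = 0) : #T ≤ f.totalDegree ^ 2 :=
  calc #T ≤ f.totalDegree * (pderiv 2 f).totalDegree :=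
        card_lines_le_totalDegree_mul_totalDegree hf hfz hT (j := 1) (j' := 0)
          (fun w _ => w.yRestrict_X_one) (fun w _ => w.yRestrict_X_zero) hTf hTfz
    _ ≤ f.totalDegree * f.totalDegree := by
        gcongr
        exact (totalDegree_pderiv_le 2 f).trans (Nat.sub_le _ _)
    _ = f.totalDegree ^ 2 := (sq _).symm

theorem card_le_or_card_le_or_subset_regulus {p : ℕ} [CharP K p] (hf : Irreducible f)
    (hfp : f.totalDegree < p)
    (hS : Set.InjOn level (S : Set (LevelLine K))) (hT : Set.InjOn level (T : Set (LevelLine K)))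
    (hSf : ∀ w ∈ S, w.xRestrict f = 0) (hTf : ∀ w ∈ T, w.yRestrict f = 0) :
    #S ≤ 3 * f.totalDegree ^ 2 ∨ #T ≤ 3 * f.totalDegree ^ 2 ∨
      ∃ a b c d : K, ∀ w ∈ S, w ∈ regulus a b c d := by
  have degree_pos : 1 ≤ f.totalDegree ^ 2 := Nat.one_le_pow _ _ (totalDegree_pos_of_irreducible hf)
  by_cases hflec : f ∣ flecnode f
  swap
  · exact .inl (card_le_three_mul_sq_of_not_dvd_flecnode hf hflec hS hSf)
  by_cases hfz : f ∣ pderiv 2 f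
  · have : #T ≤ 1 := card_le_one.2 fun w hw w' hw' =>
      hT hw hw' (level_eq_of_dvd_pderiv hf hfp hfz (hTf w hw) (hTf w' hw'))
    omega
  by_cases singular : ∀ w ∈ T, w.yRestrict (pderiv 2 f) = 0
  · have := card_le_sq_of_yRestrict_pderiv_eq_zero hf hfz hT hTf singular
    omega
  push Not at singular
  obtain ⟨w, hw, hwfz⟩ := singular
  by_cases second : ∃ w' ∈ T, w' ≠ w
  · obtain ⟨w', hw', hne⟩ := second
    refine .inr (.inr ⟨_, _, _, _, fun u hu => mem_regulus_of_xRestrict_transversalQuadric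
      (fun h => hne (hT hw' hw h)) (w := w) ?_⟩)
    obtain ⟨q, hq⟩ := dvd_transversalQuadric hf (C_dvd_tangentFlow hf hfp hflec hfz) (hTf w hw)
      hwfz (hTf w' hw')
    rw [hq, map_mul, hSf u hu, zero_mul]
  · push Not at second
    have : #T ≤ 1 := card_le_one.2 fun u hu u' hu' => (second u hu).trans (second u' hu').symm
    omega

end LevelLine

end RuledSurfaces

section Incidences

namespace LevelLine

open MvPolynomial

variable {K : Type*} [Field K]

/-- The line of `w` in a plane `x = const` meets the line of `w'` in a plane `y = const`. The
relation is symmetric because exchanging `x` and `y` exchanges the two lines encoded by a datum. -/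
def Meets (w w' : LevelLine K) : Prop :=
  w.slope * w'.level + w.intercept = w'.slope * w.level + w'.intercept

variable {X Y : Finset (LevelLine K)} {x y : LevelLine K}
  {f : MvPolynomial (Fin 3) K}

lemma meets_comm : x.Meets y ↔ y.Meets x := eq_comm

lemma eval_xRestrict_eq_eval_yRestrict (h : x.Meets y) (f : MvPolynomial (Fin 3) K) :
    (x.xRestrict f).eval y.level = (y.yRestrict f).eval x.level := by
  have at_meeting_point : (Polynomial.aeval y.level).comp x.xRestrict =
      (Polynomial.aeval x.level).comp y.yRestrict := by
    refine algHom_ext fun i => ?_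
    fin_cases i
    · simp
    · simp
    · simpa [height] using show _ = _ from h
  simpa using DFunLike.congr_fun at_meeting_point f

lemma natDegree_height_le (w : LevelLine K) : w.height.natDegree ≤ 1 :=
  Polynomial.natDegree_linear_le

lemma natDegree_xRestrict_le (w : LevelLine K) (f : MvPolynomial (Fin 3) K) :
    (w.xRestrict f).natDegree ≤ f.totalDegree := by
  refine natDegree_aeval_le_totalDegree f _ fun i => ?_
  fin_cases i <;> simp [natDegree_height_le]

lemma natDegree_yRestrict_le (w : LevelLine K) (f : MvPolynomial (Fin 3) K) :
    (w.yRestrict f).natDegree ≤ f.totalDegree := by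
  refine natDegree_aeval_le_totalDegree f _ fun i => ?_
  fin_cases i <;> simp [natDegree_height_le]

lemma card_le_natDegree_of_eval_level_eq_zero {q : Polynomial K} (hq : q ≠ 0)
    (hX : Set.InjOn level (X : Set (LevelLine K))) (h : ∀ w ∈ X, q.eval w.level = 0) :
    #X ≤ q.natDegree := by
  classical
  rw [← card_image_of_injOn hX]
  refine Polynomial.card_le_degree_of_subset_roots fun a ha => ?_
  obtain ⟨w, hw, rfl⟩ := mem_image.1 ha
  exact (Polynomial.mem_roots hq).2 (h w hw)

lemma exists_ne_zero_xRestrict_eq_zero {S : Finset (LevelLine K)} {d : ℕ}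
    (h : #S * (d + 1) < (d + 3).choose 3) :
    ∃ f : MvPolynomial (Fin 3) K, f ≠ 0 ∧ f.totalDegree ≤ d ∧ ∀ w ∈ S, w.xRestrict f = 0 := by
  let coefficients : restrictTotalDegree (Fin 3) K d →ₗ[K] (S × Fin (d + 1) → K) :=
    LinearMap.pi fun q => (Polynomial.lcoeff K q.2).comp
      ((q.1.1.xRestrict).toLinearMap.comp (Submodule.subtype _))
  have nontrivial_ker : LinearMap.ker coefficients ≠ ⊥ := by
    apply LinearMap.ker_ne_bot_of_finrank_lt
    rw [finrank_restrictTotalDegree]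
    simpa using h
  obtain ⟨⟨f, hfd⟩, hf, hf0⟩ := (Submodule.ne_bot_iff _).1 nontrivial_ker
  rw [mem_restrictTotalDegree] at hfd
  refine ⟨f, fun h => hf0 (Subtype.ext h), hfd, fun w hw => ?_⟩
  rw [Polynomial.ext_iff_natDegree_le ((w.natDegree_xRestrict_le f).trans hfd) (by simp)]
  intro k hk
  simpa [coefficients] using
    congrFun (LinearMap.mem_ker.1 hf) (⟨w, hw⟩, ⟨k, Nat.lt_succ_of_le hk⟩)

variable [DecidableEq K]

instance : DecidableRel (Meets (K := K)) := fun w w' =>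
  inferInstanceAs (Decidable (w.slope * w'.level + w.intercept = w'.slope * w.level + w'.intercept))

/-- The number of incidences between the lines of `X` in planes `x = const` and the lines of `Y` in
planes `y = const`. -/
def incidenceCount (X Y : Finset (LevelLine K)) : ℕ :=
  ∑ x ∈ X, #{y ∈ Y | x.Meets y}

lemma incidenceCount_eq_sum_right (X Y : Finset (LevelLine K)) :
    incidenceCount X Y = ∑ y ∈ Y, #{x ∈ X | x.Meets y} :=
  sum_card_bipartiteAbove_eq_sum_card_bipartiteBelow _

lemma incidenceCount_comm (X Y : Finset (LevelLine K)) :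
    incidenceCount X Y = incidenceCount Y X := by
  rw [incidenceCount_eq_sum_right, incidenceCount]
  simp only [meets_comm]

lemma incidenceCount_le_mul_left {e : ℕ} (h : ∀ x ∈ X, #{y ∈ Y | x.Meets y} ≤ e) :
    incidenceCount X Y ≤ #X * e :=
  sum_le_card_nsmul X _ e h

lemma incidenceCount_le_mul_right {e : ℕ} (h : ∀ y ∈ Y, #{x ∈ X | x.Meets y} ≤ e) :
    incidenceCount X Y ≤ #Y * e := by
  rw [incidenceCount_eq_sum_right]
  exact sum_le_card_nsmul Y _ e h

lemma incidenceCount_erase_right (hy : y ∈ Y) :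
    incidenceCount X Y = #{x ∈ X | x.Meets y} + incidenceCount X (Y.erase y) := by
  simp only [incidenceCount_eq_sum_right]
  exact (add_sum_erase Y _ hy).symm

lemma incidenceCount_filter_left (X Y : Finset (LevelLine K)) (P : LevelLine K → Prop)
    [DecidablePred P] :
    incidenceCount X Y = incidenceCount {x ∈ X | P x} Y + incidenceCount {x ∈ X | ¬ P x} Y :=
  (sum_filter_add_sum_filter_not X P _).symm

lemma incidenceCount_filter_right (X Y : Finset (LevelLine K)) (P : LevelLine K → Prop)
    [DecidablePred P] :
    incidenceCount X Y = incidenceCount X {y ∈ Y | P y} + incidenceCount X {y ∈ Y | ¬ P y} := by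
  rw [incidenceCount_comm, incidenceCount_filter_left Y X P, incidenceCount_comm X,
    incidenceCount_comm X]

lemma card_meets_le_totalDegree_of_xRestrict_ne_zero
    (hY : Set.InjOn level (Y : Set (LevelLine K))) (hYf : ∀ y ∈ Y, y.yRestrict f = 0)
    (hx : x.xRestrict f ≠ 0) : #{y ∈ Y | x.Meets y} ≤ f.totalDegree := by
  refine (card_le_natDegree_of_eval_level_eq_zero hx
    (hY.mono (coe_subset.2 (filter_subset _ _))) fun y hy => ?_).trans (x.natDegree_xRestrict_le f)
  obtain ⟨hyY, hxy⟩ := mem_filter.1 hy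
  rw [eval_xRestrict_eq_eval_yRestrict hxy, hYf y hyY, Polynomial.eval_zero]

lemma card_meets_le_totalDegree_of_yRestrict_ne_zero
    (hX : Set.InjOn level (X : Set (LevelLine K))) (hXf : ∀ x ∈ X, x.xRestrict f = 0)
    (hy : y.yRestrict f ≠ 0) : #{x ∈ X | x.Meets y} ≤ f.totalDegree := by
  refine (card_le_natDegree_of_eval_level_eq_zero hy
    (hX.mono (coe_subset.2 (filter_subset _ _))) fun x hx => ?_).trans (y.natDegree_yRestrict_le f)
  obtain ⟨hxX, hxy⟩ := mem_filter.1 hx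
  rw [← eval_xRestrict_eq_eval_yRestrict hxy, hXf x hxX, Polynomial.eval_zero]

open Classical in
/-- A line off the surface `g = 0` meets at most `deg g` lines on it. -/
lemma incidenceCount_le_on_add_off (g : MvPolynomial (Fin 3) K)
    (hX : Set.InjOn level (X : Set (LevelLine K))) (hY : Set.InjOn level (Y : Set (LevelLine K))) :
    incidenceCount X Y ≤
      incidenceCount {x ∈ X | x.xRestrict g = 0} {y ∈ Y | y.yRestrict g = 0} +
        incidenceCount {x ∈ X | ¬ x.xRestrict g = 0} {y ∈ Y | ¬ y.yRestrict g = 0} +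
        g.totalDegree * (#X + #Y) := by
  have on_off : incidenceCount {x ∈ X | x.xRestrict g = 0} {y ∈ Y | ¬ y.yRestrict g = 0} ≤
      #Y * g.totalDegree :=
    (incidenceCount_le_mul_right fun y hy => card_meets_le_totalDegree_of_yRestrict_ne_zero
      (hX.mono (coe_subset.2 (filter_subset _ _))) (fun x hx => (mem_filter.1 hx).2)
      (mem_filter.1 hy).2).trans (Nat.mul_le_mul_right _ (card_filter_le _ _))
  have off_on : incidenceCount {x ∈ X | ¬ x.xRestrict g = 0} {y ∈ Y | y.yRestrict g = 0} ≤
      #X * g.totalDegree :=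
    (incidenceCount_le_mul_left fun x hx => card_meets_le_totalDegree_of_xRestrict_ne_zero
      (hY.mono (coe_subset.2 (filter_subset _ _))) (fun y hy => (mem_filter.1 hy).2)
      (mem_filter.1 hx).2).trans (Nat.mul_le_mul_right _ (card_filter_le _ _))
  rw [incidenceCount_filter_left X Y fun x => x.xRestrict g = 0,
    incidenceCount_filter_right _ Y fun y => y.yRestrict g = 0,
    incidenceCount_filter_right {x ∈ X | ¬ x.xRestrict g = 0} Y fun y => y.yRestrict g = 0]
  linarith

lemma incidenceCount_eq_zero_of_isUnit (hf : IsUnit f) (hXf : ∀ x ∈ X, x.xRestrict f = 0) :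
    incidenceCount X Y = 0 :=
  sum_eq_zero fun x hx => absurd (hXf x hx) (hf.map x.xRestrict).ne_zero

open Classical in
lemma incidenceCount_le_of_forall_irreducible {X₀ Y₀ : Finset (LevelLine K)} {d : ℕ} {Λ κ : ℝ}
    (hκ : 0 ≤ κ) (hX₀ : Set.InjOn level (X₀ : Set (LevelLine K)))
    (hY₀ : Set.InjOn level (Y₀ : Set (LevelLine K)))
    (component : ∀ g : MvPolynomial (Fin 3) K, Irreducible g → g.totalDegree ≤ d →
      ∀ X ⊆ X₀, ∀ Y ⊆ Y₀, (∀ x ∈ X, x.xRestrict g = 0) → (∀ y ∈ Y, y.yRestrict g = 0) →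
      (incidenceCount X Y : ℝ) ≤ g.totalDegree * Λ + κ * (#X + #Y)) :
    f ≠ 0 → f.totalDegree ≤ d → ∀ X ⊆ X₀, ∀ Y ⊆ Y₀,
      (∀ x ∈ X, x.xRestrict f = 0) → (∀ y ∈ Y, y.yRestrict f = 0) →
      (incidenceCount X Y : ℝ) ≤ f.totalDegree * (Λ + #X₀ + #Y₀) + κ * (#X + #Y) := by
  induction f using WfDvdMonoid.induction_on_irreducible with
  | zero => exact fun h => absurd rfl h
  | unit u hu =>
    intro _ _ X _ Y _ hXu _
    rw [incidenceCount_eq_zero_of_isUnit hu hXu, (isUnit_iff_totalDegree_of_isReduced.1 hu).2,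
      Nat.cast_zero, zero_mul, zero_add]
    positivity
  | mul h g hh hg ih =>
    intro _ hd X hX Y hY hXf hYf
    rw [totalDegree_mul_of_isDomain hg.ne_zero hh] at hd ⊢
    have on_g := component g hg (by omega) {x ∈ X | x.xRestrict g = 0}
      ((filter_subset _ _).trans hX) {y ∈ Y | y.yRestrict g = 0} ((filter_subset _ _).trans hY)
      (fun x hx => (mem_filter.1 hx).2) (fun y hy => (mem_filter.1 hy).2)
    have off_g := ih hh (by omega) {x ∈ X | ¬ x.xRestrict g = 0}
      ((filter_subset _ _).trans hX) {y ∈ Y | ¬ y.yRestrict g = 0} ((filter_subset _ _).trans hY)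
      (fun x hx => by
        have := hXf x (mem_filter.1 hx).1
        rw [map_mul] at this
        exact (mul_eq_zero.1 this).resolve_left (mem_filter.1 hx).2)
      (fun y hy => by
        have := hYf y (mem_filter.1 hy).1
        rw [map_mul] at this
        exact (mul_eq_zero.1 this).resolve_left (mem_filter.1 hy).2)
    have split := incidenceCount_le_on_add_off g (hX₀.mono (coe_subset.2 hX))
      (hY₀.mono (coe_subset.2 hY))
    have mixed : g.totalDegree * (#X + #Y) ≤ g.totalDegree * (#X₀ + #Y₀) := by gcongr
    rw [← card_filter_add_card_filter_not (s := X) fun x => x.xRestrict g = 0,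
      ← card_filter_add_card_filter_not (s := Y) fun y => y.yRestrict g = 0] at mixed split ⊢
    rify at split mixed
    push_cast
    linarith

end LevelLine

end Incidences

section GreedyCover

variable {α β : Type*} (r : α → β → Prop) [∀ x y, Decidable (r x y)] (d : ℕ)

/-- The potential of `y` in the greedy choice of a set `S` in which every `y` has more than `d`
neighbours: it is halved by each new neighbour and vanishes once there are enough of them. -/
noncomputable def coverWeight (S : Finset α) (y : β) : ℝ :=
  if #{x ∈ S | r x y} ≤ d then (1 / 2) ^ #{x ∈ S | r x y} else 0

variable {r d} {X S : Finset α} {Y : Finset β} {x : α} {y : β} {D : ℝ}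

lemma coverWeight_nonneg : 0 ≤ coverWeight r d S y := by
  unfold coverWeight
  split_ifs <;> positivity

section Insert

variable [DecidableEq α]

lemma coverWeight_insert_le_half (hx : x ∉ S) (hxy : r x y) :
    coverWeight r d (insert x S) y ≤ coverWeight r d S y / 2 := by
  have card_insert : #{x ∈ insert x S | r x y} = #{x ∈ S | r x y} + 1 := by
    rw [filter_insert, if_pos hxy, card_insert_of_notMem fun h => hx (mem_filter.1 h).1]
  unfold coverWeight
  rw [card_insert]
  split_ifs with h_succ h h
  · rw [pow_succ, mul_one_div]
  · omega
  · positivity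
  · simp

lemma coverWeight_insert_le : coverWeight r d (insert x S) y ≤ coverWeight r d S y := by
  by_cases hx : x ∈ S
  · rw [insert_eq_of_mem hx]
  by_cases hxy : r x y
  · exact (coverWeight_insert_le_half hx hxy).trans (half_le_self coverWeight_nonneg)
  · unfold coverWeight
    rw [filter_insert, if_neg hxy]

lemma sub_le_card_filter_notMem (hD : D ≤ #{x ∈ X | r x y}) (hd : #{x ∈ S | r x y} ≤ d) :
    D - d ≤ #{x ∈ X | r x y ∧ x ∉ S} := by
  have cover : ({x ∈ X | r x y} : Finset α) ⊆
      ({x ∈ X | r x y ∧ x ∉ S} : Finset α) ∪ {x ∈ S | r x y} := by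
    intro x
    simp only [mem_union, mem_filter]
    tauto
  have : #{x ∈ X | r x y} ≤ #{x ∈ X | r x y ∧ x ∉ S} + d :=
    (card_le_card cover).trans ((card_union_le _ _).trans (by omega))
  have : (#{x ∈ X | r x y} : ℝ) ≤ #{x ∈ X | r x y ∧ x ∉ S} + d := mod_cast this
  linarith

lemma sum_coverWeight_insert_le (hD : D ≤ #{x ∈ X | r x y}) :
    ∑ x ∈ X, coverWeight r d (insert x S) y ≤ (#X - (D - d) / 2) * coverWeight r d S y := by
  by_cases hd : #{x ∈ S | r x y} ≤ d
  · have new := sub_le_card_filter_notMem hD hd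
    calc ∑ x ∈ X, coverWeight r d (insert x S) y
        ≤ ∑ x ∈ X, (coverWeight r d S y -
            if r x y ∧ x ∉ S then coverWeight r d S y / 2 else 0) := by
          refine sum_le_sum fun x _ => ?_
          split_ifs with h
          · linarith [coverWeight_insert_le_half (d := d) h.2 h.1]
          · linarith [coverWeight_insert_le (r := r) (d := d) (S := S) (x := x) (y := y)]
      _ = (#X - #{x ∈ X | r x y ∧ x ∉ S} / 2) * coverWeight r d S y := by
          rw [sum_sub_distrib, sum_const, ← sum_filter, sum_const, nsmul_eq_mul, nsmul_eq_mul]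
          ring
      _ ≤ (#X - (D - d) / 2) * coverWeight r d S y := by
          gcongr
          exact coverWeight_nonneg
  · have saturated : coverWeight r d S y = 0 := if_neg hd
    rw [saturated, mul_zero]
    exact sum_nonpos fun x _ => coverWeight_insert_le.trans saturated.le

lemma exists_sum_coverWeight_insert_le (hX : X.Nonempty) (hD : ∀ y ∈ Y, D ≤ #{x ∈ X | r x y}) :
    ∃ x ∈ X, ∑ y ∈ Y, coverWeight r d (insert x S) y ≤
      (1 - (D - d) / (2 * #X)) * ∑ y ∈ Y, coverWeight r d S y := by
  refine exists_le_of_sum_le hX ?_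
  have : (0 : ℝ) < #X := mod_cast hX.card_pos
  calc ∑ x ∈ X, ∑ y ∈ Y, coverWeight r d (insert x S) y
      = ∑ y ∈ Y, ∑ x ∈ X, coverWeight r d (insert x S) y := sum_comm
    _ ≤ ∑ y ∈ Y, (#X - (D - d) / 2) * coverWeight r d S y :=
        sum_le_sum fun y hy => sum_coverWeight_insert_le (hD y hy)
    _ = ∑ x ∈ X, (1 - (D - d) / (2 * #X)) * ∑ y ∈ Y, coverWeight r d S y := by
        rw [← mul_sum, sum_const, nsmul_eq_mul]
        field_simp

end Insert

lemma exists_sum_coverWeight_le (hX : X.Nonempty) (hD : ∀ y ∈ Y, D ≤ #{x ∈ X | r x y})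
    (hDX : D - d ≤ 2 * #X) (R : ℕ) :
    ∃ S ⊆ X, #S ≤ R ∧ ∑ y ∈ Y, coverWeight r d S y ≤ #Y * (1 - (D - d) / (2 * #X)) ^ R := by
  classical
  have : (0 : ℝ) < #X := mod_cast hX.card_pos
  have ratio_nonneg : 0 ≤ 1 - (D - d) / (2 * #X) := by
    rw [sub_nonneg, div_le_one (by positivity)]
    exact hDX
  induction R with
  | zero => exact ⟨∅, by simp, by simp, by simp [coverWeight]⟩
  | succ R ih =>
    obtain ⟨S, hSX, hSR, weight_le⟩ := ih
    obtain ⟨x, hx, insert_le⟩ := exists_sum_coverWeight_insert_le (S := S) (d := d) hX hD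
    refine ⟨insert x S, insert_subset hx hSX, (card_insert_le _ _).trans (by omega),
      insert_le.trans ?_⟩
    calc _ ≤ (1 - (D - d) / (2 * #X)) * (#Y * (1 - (D - d) / (2 * #X)) ^ R) := by gcongr
      _ = _ := by ring

lemma exists_subset_forall_lt_card_filter (hX : X.Nonempty) (hD : ∀ y ∈ Y, D ≤ #{x ∈ X | r x y})
    (hDX : D - d ≤ 2 * #X) {R : ℕ} (hR : #Y * (1 - (D - d) / (2 * #X)) ^ R < (1 / 2) ^ d) :
    ∃ S ⊆ X, #S ≤ R ∧ ∀ y ∈ Y, d < #{x ∈ S | r x y} := by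
  obtain ⟨S, hSX, hSR, weight_le⟩ := exists_sum_coverWeight_le hX hD hDX R
  refine ⟨S, hSX, hSR, fun y hy => ?_⟩
  by_contra! few
  have : coverWeight r d S y < (1 / 2) ^ d :=
    ((single_le_sum (fun _ _ => coverWeight_nonneg) hy).trans weight_le).trans_lt hR
  rw [coverWeight, if_pos few] at this
  exact this.not_ge (pow_le_pow_of_le_one (by norm_num) (by norm_num) few)

lemma mul_one_sub_pow_lt_half_pow {θ a : ℝ} {n R : ℕ} (hθ : θ ≤ 1) (hn : n ≤ Real.exp a)
    (h : a + d < R * θ) : n * (1 - θ) ^ R < (1 / 2) ^ d := by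
  have : 0 ≤ 1 - θ := sub_nonneg.2 hθ
  have exp_neg_one_le : Real.exp (-1) ≤ 1 / 2 := by
    rw [Real.exp_neg, one_div]
    exact inv_anti₀ two_pos (by linarith [Real.add_one_le_exp (1 : ℝ)])
  calc (n : ℝ) * (1 - θ) ^ R ≤ Real.exp a * Real.exp (-θ) ^ R := by
        gcongr
        exact Real.one_sub_le_exp_neg θ
    _ = Real.exp (a - R * θ) := by rw [← Real.exp_nat_mul, ← Real.exp_add]; ring_nf
    _ < Real.exp (d * -1) := Real.exp_lt_exp.2 (by linarith)
    _ = Real.exp (-1) ^ d := Real.exp_nat_mul _ _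
    _ ≤ (1 / 2) ^ d := by gcongr

lemma natCast_le_exp_four_mul_sqrt {m n : ℕ} (h : n ≤ m ^ 2) : (n : ℝ) ≤ Real.exp (4 * √m) :=
  calc (n : ℝ) ≤ (m : ℝ) ^ 2 := mod_cast h
    _ = √m ^ 4 := by rw [← Real.sq_sqrt m.cast_nonneg]; ring_nf; simp
    _ ≤ Real.exp (√m) ^ 4 := by gcongr; linarith [Real.add_one_le_exp (√m)]
    _ = Real.exp (4 * √m) := by rw [← Real.exp_nat_mul]; norm_num

/-- The greedy choice with `d` about `√#X / 16` stops after about `d ^ 2 / 6` elements. -/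
lemma exists_sample (hX : 2 ^ 20 ≤ √(#X : ℝ)) (hY : #Y ≤ #X ^ 2)
    (hr : ∀ y ∈ Y, 2 ^ 20 * √(#X : ℝ) ≤ #{x ∈ X | r x y}) :
    ∃ (d : ℕ) (S : Finset α), d ≤ √(#X : ℝ) / 16 ∧ S ⊆ X ∧ #S * (d + 1) < (d + 3).choose 3 ∧
      ∀ y ∈ Y, d < #{x ∈ S | r x y} := by
  have X_nonempty : X.Nonempty := by
    rw [nonempty_iff_ne_empty]
    rintro rfl
    norm_num at hX
  have card_Y_le := natCast_le_exp_four_mul_sqrt hY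
  have s_sq : (#X : ℝ) = √(#X : ℝ) ^ 2 := (Real.sq_sqrt (Nat.cast_nonneg _)).symm
  generalize √(#X : ℝ) = s at hX hr card_Y_le s_sq ⊢
  have s_pos : 0 < s := by linarith
  set d := ⌊s / 16⌋₊
  set R := (d ^ 2 + 5 * d + 5) / 6
  have d_le : (d : ℝ) ≤ s / 16 := Nat.floor_le (by positivity)
  have le_d : s / 32 ≤ d := by linarith [Nat.lt_floor_add_one (s / 16)]
  have le_R : s ^ 2 / 6144 ≤ R := by
    have : (d : ℝ) ^ 2 ≤ 6 * R := mod_cast (by omega : d ^ 2 ≤ 6 * R)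
    nlinarith
  have le_ratio : 2 ^ 18 / s ≤ (2 ^ 20 * s - d) / (2 * #X) := by
    rw [s_sq, div_le_div_iff₀ s_pos (by positivity)]
    nlinarith
  have excess_le : 2 ^ 20 * s - d ≤ 2 * #X := by
    rw [s_sq]
    nlinarith
  obtain ⟨S, hSX, hSR, hS⟩ := exists_subset_forall_lt_card_filter X_nonempty hr excess_le
    (mul_one_sub_pow_lt_half_pow (R := R) (div_le_one_of_le₀ excess_le (by positivity))
      card_Y_le (by
        have : s ^ 2 / 6144 * (2 ^ 18 / s) ≤ R * ((2 ^ 20 * s - d) / (2 * #X)) := by gcongr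
        have : s ^ 2 / 6144 * (2 ^ 18 / s) = s * (2 ^ 18 / 6144) := by field_simp
        linarith))
  refine ⟨d, S, d_le, hSX, ?_, hS⟩
  have : 6 * R ≤ d ^ 2 + 5 * d + 5 := Nat.mul_div_le _ 6
  nlinarith [six_mul_choose_three d, Nat.mul_le_mul_right (d + 1) hSR]

end GreedyCover

section IncidenceTheorem

/-- The incidence bound for families of `m` and `n` lines with at most `κ` lines in each regulus. -/
noncomputable def incidenceBound (κ m n : ℝ) : ℝ := 2 ^ 20 * (m * √n + n * √m) + κ * (m + n)

lemma incidenceBound_comm (κ m n : ℝ) : incidenceBound κ m n = incidenceBound κ n m := by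
  unfold incidenceBound
  ring

lemma add_incidenceBound_sub_one_le {κ m n : ℝ} (hm : 0 ≤ m) :
    κ + 2 ^ 20 * √m + incidenceBound κ m (n - 1) ≤ incidenceBound κ m n := by
  have : m * √(n - 1) ≤ m * √n := by
    gcongr
    linarith
  unfold incidenceBound
  linarith

lemma incidenceBound_le_of_le_three_mul_sq {κ m n m' n' : ℝ} {e : ℕ} (hn'0 : 0 ≤ n')
    (hn' : n' ≤ n) (hm' : m' ≤ 3 * e ^ 2) (he : e ≤ √m / 16) (hm : 0 ≤ m) :
    incidenceBound κ m' n' ≤ e * (2 ^ 20 * (√m * √n + 2 * m + 2 * n)) + κ * (m' + n') := by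
  have sqrt_le : √m' ≤ 2 * e := by
    refine Real.sqrt_le_iff.2 ⟨by positivity, ?_⟩
    linarith [sq_nonneg (e : ℝ), mul_pow 2 (e : ℝ) 2]
  have m'_le : m' ≤ e * √m := by nlinarith [e.cast_nonneg (α := ℝ)]
  have first : m' * √n' ≤ e * √m * √n := by gcongr
  have second : n' * √m' ≤ n * (2 * e) := by
    have := hn'0.trans hn'
    gcongr
  have third : 0 ≤ e * m := by positivity
  unfold incidenceBound
  linarith

lemma mul_add_le_incidenceBound {κ m n e : ℝ} (hm : 0 ≤ m) (hmn : m ≤ n) (he : e ≤ √m / 16) :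
    e * (2 ^ 20 * (√m * √n + 2 * m + 2 * n) + m + n) + κ * (m + n) ≤ incidenceBound κ m n := by
  have hn : 0 ≤ n := hm.trans hmn
  have hm_sq : √m * √m = m := Real.mul_self_sqrt hm
  have sqrt_mul_le : √m * m ≤ √m * n := by gcongr
  have : 0 ≤ m * √n := by positivity
  have : 0 ≤ √m * n := by positivity
  calc _ ≤ √m / 16 * (2 ^ 20 * (√m * √n + 2 * m + 2 * n) + m + n) + κ * (m + n) := by gcongr
    _ = 2 ^ 16 * (√m * √m * √n) + (2 ^ 17 + 1 / 16) * (√m * m + √m * n) + κ * (m + n) := by ring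
    _ ≤ incidenceBound κ m n := by
        rw [hm_sq, incidenceBound]
        linarith [mul_comm n √m]

lemma card_offDiag_le_sq {α : Type*} (s : Finset α) : #s.offDiag ≤ #s ^ 2 := by
  classical
  rw [offDiag_card, sq]
  exact Nat.sub_le _ _

namespace LevelLine

open MvPolynomial

variable {K : Type*} [Field K] {X Y X' : Finset (LevelLine K)} {κ : ℝ}

/-- At most `κ` lines of `X` lie in a common regulus. -/
def RegulusBounded (κ : ℝ) (X : Finset (LevelLine K)) : Prop :=
  ∀ T ⊆ X, ∀ a b c d : K, (∀ w ∈ T, w ∈ regulus a b c d) → (#T : ℝ) ≤ κ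

lemma RegulusBounded.mono (h : X' ⊆ X) (hX : RegulusBounded κ X) : RegulusBounded κ X' :=
  fun T hT => hX T (hT.trans h)

lemma mem_regulus_of_meets {x x' y : LevelLine K} (hlevel : x.level ≠ x'.level) (hx : x.Meets y)
    (hx' : x'.Meets y) :
    y ∈ regulus ((x.slope - x'.slope) / (x.level - x'.level))
      ((x.intercept - x'.intercept) / (x.level - x'.level))
      (x.slope - (x.slope - x'.slope) / (x.level - x'.level) * x.level)
      (x.intercept - (x.intercept - x'.intercept) / (x.level - x'.level) * x.level) := by
  have hne : x.level - x'.level ≠ 0 := sub_ne_zero.2 hlevel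
  unfold Meets at hx hx'
  constructor
  · field_simp
    linear_combination hx' - hx
  · field_simp
    linear_combination (-x.level) * hx' + x'.level * hx

variable [DecidableEq K]

lemma RegulusBounded.card_meets_meets_le (hY : RegulusBounded κ Y) {x x' : LevelLine K}
    (hlevel : x.level ≠ x'.level) : (#{y ∈ Y | x.Meets y ∧ x'.Meets y} : ℝ) ≤ κ :=
  hY _ (filter_subset _ _) _ _ _ _ fun _ hy =>
    mem_regulus_of_meets hlevel (mem_filter.1 hy).2.1 (mem_filter.1 hy).2.2

lemma card_le_card_sq_of_lt_card_meets (hκ : 1 ≤ κ)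
    (hX : Set.InjOn level (X : Set (LevelLine K))) (hY : RegulusBounded κ Y)
    (rich : ∀ y ∈ Y, κ + 1 ≤ #{x ∈ X | x.Meets y}) : #Y ≤ #X ^ 2 := by
  let meetsBoth (y : LevelLine K) (q : LevelLine K × LevelLine K) : Prop :=
    q.1.Meets y ∧ q.2.Meets y
  have many_pairs : ∀ y ∈ Y, κ ≤ #(X.offDiag.bipartiteAbove meetsBoth y) := by
    intro y hy
    have : X.offDiag.bipartiteAbove meetsBoth y = ({x ∈ X | x.Meets y} : Finset _).offDiag := by
      ext q
      simp only [mem_bipartiteAbove, mem_offDiag, mem_filter, meetsBoth]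
      tauto
    rw [this, offDiag_card, Nat.cast_sub (Nat.le_mul_self _)]
    push_cast
    nlinarith [rich y hy]
  have few_common : ∀ q ∈ X.offDiag, (#(Y.bipartiteBelow meetsBoth q) : ℝ) ≤ κ := by
    intro q hq
    obtain ⟨h₁, h₂, hne⟩ := mem_offDiag.1 hq
    exact hY.card_meets_meets_le fun h => hne (hX h₁ h₂ h)
  have := card_nsmul_le_card_nsmul meetsBoth many_pairs few_common
  rw [nsmul_eq_mul, nsmul_eq_mul, mul_le_mul_iff_left₀ (by linarith), Nat.cast_le] at this
  exact this.trans (card_offDiag_le_sq X)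

lemma incidenceCount_le_of_card_meets_le {y : LevelLine K} (hy : y ∈ Y)
    (poor : #{x ∈ X | x.Meets y} ≤ κ + 2 ^ 20 * √(#X : ℝ))
    (h : incidenceCount X (Y.erase y) ≤ incidenceBound κ #X #(Y.erase y)) :
    incidenceCount X Y ≤ incidenceBound κ #X #Y := by
  rw [card_erase_of_mem hy, Nat.cast_sub (card_pos.2 ⟨y, hy⟩), Nat.cast_one] at h
  rw [incidenceCount_erase_right hy]
  push_cast
  linarith [add_incidenceBound_sub_one_le (κ := κ) (n := #Y) (Nat.cast_nonneg #X)]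

lemma exists_surface (hκ : 1 ≤ κ) (hX : Set.InjOn level (X : Set (LevelLine K)))
    (hY : Set.InjOn level (Y : Set (LevelLine K))) (hYκ : RegulusBounded κ Y) (hXY : #X ≤ #Y)
    (hYne : Y.Nonempty)
    (rich_left : ∀ x ∈ X, κ + 2 ^ 20 * √(#Y : ℝ) < #{y ∈ Y | x.Meets y})
    (rich_right : ∀ y ∈ Y, κ + 2 ^ 20 * √(#X : ℝ) < #{x ∈ X | x.Meets y}) :
    ∃ f : MvPolynomial (Fin 3) K, f ≠ 0 ∧ f.totalDegree ≤ √(#X : ℝ) / 16 ∧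
      (∀ x ∈ X, x.xRestrict f = 0) ∧ ∀ y ∈ Y, y.yRestrict f = 0 := by
  have sqrt_X_large : 2 ^ 20 ≤ √(#X : ℝ) := by
    obtain ⟨y, hy⟩ := hYne
    have : (#{x ∈ X | x.Meets y} : ℝ) ≤ #X := mod_cast card_filter_le _ _
    nlinarith [rich_right y hy, Real.sq_sqrt (Nat.cast_nonneg (α := ℝ) #X),
      Real.sqrt_nonneg (#X : ℝ)]
  have card_Y_le : #Y ≤ #X ^ 2 := card_le_card_sq_of_lt_card_meets hκ hX hYκ fun y hy => by
    linarith [rich_right y hy]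
  obtain ⟨d, S, hd, hSX, interpolable, hS⟩ :=
    exists_sample sqrt_X_large card_Y_le fun y hy => by linarith [rich_right y hy]
  obtain ⟨f, hf0, hfd, hfS⟩ := exists_ne_zero_xRestrict_eq_zero interpolable
  have hfY : ∀ y ∈ Y, y.yRestrict f = 0 := by
    intro y hy
    by_contra off
    exact ((hS y hy).trans_le (card_meets_le_totalDegree_of_yRestrict_ne_zero
      (hX.mono (coe_subset.2 hSX)) hfS off)).not_ge hfd
  have hfd' : (f.totalDegree : ℝ) ≤ √(#X : ℝ) / 16 := le_trans (mod_cast hfd) hd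
  refine ⟨f, hf0, hfd', fun x hx => ?_, hfY⟩
  by_contra off
  have : (#{y ∈ Y | x.Meets y} : ℝ) ≤ f.totalDegree :=
    mod_cast card_meets_le_totalDegree_of_xRestrict_ne_zero hY hfY off
  have : √(#X : ℝ) ≤ √(#Y : ℝ) := by gcongr
  linarith [rich_left x hx]

lemma incidenceCount_le_of_irreducible {p : ℕ} [CharP K p] (hκ : 0 ≤ κ)
    {g : MvPolynomial (Fin 3) K} (hg : Irreducible g) (hX : Set.InjOn level (X : Set (LevelLine K)))
    (hY : Set.InjOn level (Y : Set (LevelLine K))) (hXκ : RegulusBounded κ X)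
    (hXg : ∀ x ∈ X, x.xRestrict g = 0) (hYg : ∀ y ∈ Y, y.yRestrict g = 0)
    {m n : ℕ} (hm : m ≤ p ^ 2) (hmn : m ≤ n) (hXm : #X ≤ m) (hYn : #Y ≤ n)
    (hgm : g.totalDegree ≤ √(m : ℝ) / 16)
    (ih : #X < m ∨ #Y < n → incidenceCount X Y ≤ incidenceBound κ #X #Y) :
    incidenceCount X Y ≤
      g.totalDegree * (2 ^ 20 * (√(m : ℝ) * √(n : ℝ) + 2 * m + 2 * n)) + κ * (#X + #Y) := by
  have degree_pos : (1 : ℝ) ≤ g.totalDegree := mod_cast totalDegree_pos_of_irreducible hg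
  have m_sq : √(m : ℝ) ^ 2 = m := Real.sq_sqrt m.cast_nonneg
  have degree_lt : g.totalDegree < p := by
    have : √(m : ℝ) ≤ p := Real.sqrt_le_iff.2 ⟨by positivity, mod_cast hm⟩
    exact_mod_cast (by linarith : (g.totalDegree : ℝ) < p)
  have three_mul_sq_lt : 3 * g.totalDegree ^ 2 < m := by
    exact_mod_cast (by nlinarith : 3 * (g.totalDegree : ℝ) ^ 2 < m)
  have hXn : (#X : ℝ) ≤ m := mod_cast hXm
  have hYn' : (#Y : ℝ) ≤ n := mod_cast hYn
  rcases card_le_or_card_le_or_subset_regulus hg degree_lt hX hY hXg hYg with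
    few | few | ⟨a, b, c, d, ruled⟩
  · exact (ih (.inl (few.trans_lt three_mul_sq_lt))).trans <|
      incidenceBound_le_of_le_three_mul_sq (Nat.cast_nonneg _) hYn' (mod_cast few) hgm
        m.cast_nonneg
  · have degree_le_sqrt_n : (g.totalDegree : ℝ) ≤ √(n : ℝ) / 16 := hgm.trans (by gcongr)
    have := incidenceBound_le_of_le_three_mul_sq (κ := κ) (m' := #Y) (Nat.cast_nonneg #X) hXn
      (mod_cast few) degree_le_sqrt_n n.cast_nonneg
    rw [incidenceBound_comm] at this
    linarith [ih (.inr (few.trans_lt (three_mul_sq_lt.trans_le hmn)))]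
  · have trivial_bound : (incidenceCount X Y : ℝ) ≤ #Y * #X :=
      mod_cast incidenceCount_le_mul_right fun y _ => card_filter_le X _
    have card_le : (#Y : ℝ) * #X ≤ #Y * κ := by
      gcongr
      exact hXκ X subset_rfl a b c d ruled
    have : 0 ≤ κ * #X := by positivity
    have : 0 ≤ g.totalDegree * (2 ^ 20 * (√(m : ℝ) * √(n : ℝ) + 2 * m + 2 * n)) := by positivity
    linarith

lemma incidenceCount_le_of_forall_subset {p : ℕ} [CharP K p] (hκ : 1 ≤ κ)
    (hX : Set.InjOn level (X : Set (LevelLine K))) (hY : Set.InjOn level (Y : Set (LevelLine K)))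
    (hXκ : RegulusBounded κ X) (hYκ : RegulusBounded κ Y) (hXp : #X ≤ p ^ 2) (hXY : #X ≤ #Y)
    (ih : ∀ X' ⊆ X, ∀ Y' ⊆ Y, #X' + #Y' < #X + #Y →
      incidenceCount X' Y' ≤ incidenceBound κ #X' #Y') :
    incidenceCount X Y ≤ incidenceBound κ #X #Y := by
  rcases Y.eq_empty_or_nonempty with rfl | hYne
  · rw [incidenceCount_eq_sum_right, sum_empty, incidenceBound, Nat.cast_zero]
    positivity
  by_cases poor_right : ∃ y ∈ Y, #{x ∈ X | x.Meets y} ≤ κ + 2 ^ 20 * √(#X : ℝ)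
  · obtain ⟨y, hy, poor⟩ := poor_right
    exact incidenceCount_le_of_card_meets_le hy poor
      (ih X subset_rfl _ (erase_subset y Y) (Nat.add_lt_add_left (card_erase_lt_of_mem hy) _))
  by_cases poor_left : ∃ x ∈ X, #{y ∈ Y | x.Meets y} ≤ κ + 2 ^ 20 * √(#Y : ℝ)
  · obtain ⟨x, hx, poor⟩ := poor_left
    simp only [meets_comm (x := x)] at poor
    have := ih _ (erase_subset x X) Y subset_rfl
      (Nat.add_lt_add_right (card_erase_lt_of_mem hx) _)
    rw [incidenceCount_comm, incidenceBound_comm] at this ⊢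
    exact incidenceCount_le_of_card_meets_le hx poor this
  push Not at poor_left poor_right
  obtain ⟨f, hf0, hfd, hXf, hYf⟩ := exists_surface hκ hX hY hYκ hXY hYne poor_left poor_right
  refine (incidenceCount_le_of_forall_irreducible (d := f.totalDegree) (zero_le_one.trans hκ) hX hY
    (fun g hg hgf X' hX' Y' hY' hXg hYg => incidenceCount_le_of_irreducible (zero_le_one.trans hκ)
      hg (hX.mono (coe_subset.2 hX')) (hY.mono (coe_subset.2 hY')) (hXκ.mono hX') hXg hYg hXp hXY
      (card_le_card hX') (card_le_card hY') (le_trans (mod_cast hgf) hfd) fun h => ?_)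
    hf0 le_rfl X subset_rfl Y subset_rfl hXf hYf).trans
    (mul_add_le_incidenceBound (Nat.cast_nonneg _) (mod_cast hXY) hfd)
  have := card_le_card hX'
  have := card_le_card hY'
  exact ih X' hX' Y' hY' (by omega)

theorem incidenceCount_le_incidenceBound {p : ℕ} [CharP K p] (hκ : 1 ≤ κ)
    (hX : Set.InjOn level (X : Set (LevelLine K))) (hY : Set.InjOn level (Y : Set (LevelLine K)))
    (hXκ : RegulusBounded κ X) (hYκ : RegulusBounded κ Y) (hXp : #X ≤ p ^ 2) (hYp : #Y ≤ p ^ 2) :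
    incidenceCount X Y ≤ incidenceBound κ #X #Y := by
  induction h : #X + #Y using Nat.strong_induction_on generalizing X Y with
  | _ N ih =>
    wlog hXY : #X ≤ #Y generalizing X Y
    · rw [incidenceCount_comm, incidenceBound_comm]
      exact this hY hX hYκ hXκ hYp hXp (by omega) (by omega)
    refine incidenceCount_le_of_forall_subset hκ hX hY hXκ hYκ hXp hXY fun X' hX' Y' hY' hlt => ?_
    exact ih _ (h ▸ hlt) (hX.mono (coe_subset.2 hX')) (hY.mono (coe_subset.2 hY'))
      (hXκ.mono hX') (hYκ.mono hY') ((card_le_card hX').trans hXp) ((card_le_card hY').trans hYp)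
      rfl

end LevelLine

end IncidenceTheorem

section LineEnergy

variable {F : Type*} [Field F]

/-- The value at `u` of the line with slope `l.1` and intercept `l.2`. Non-vertical lines are
encoded as such pairs `l : F × F`. -/
def lineValue (l : F × F) (u : F) : F := l.1 * u + l.2

/-- At most `κ` lines of `L` belong to a common pencil, that is, are concurrent or parallel. In the
plane of pairs (slope, intercept) a pencil is a line `α * l.1 + β * l.2 = γ`. -/
def PencilBounded (κ : ℝ) (L : Finset (F × F)) : Prop :=
  ∀ T ⊆ L, ∀ α β γ : F, α ≠ 0 ∨ β ≠ 0 → (∀ l ∈ T, α * l.1 + β * l.2 = γ) → (#T : ℝ) ≤ κ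

lemma one_add_X_mul_C_ne_zero (m : F) : 1 + RatFunc.X * RatFunc.C m ≠ 0 := by
  rw [← RatFunc.algebraMap_X, ← RatFunc.algebraMap_C,
    ← map_one (algebraMap (Polynomial F) (RatFunc F)), ← map_mul, ← map_add, Ne,
    map_eq_zero_iff _ (RatFunc.algebraMap_injective F)]
  intro h
  simpa using congrArg (Polynomial.eval 0) h

/-- The image of the point `(u, l.1, l.2)` of affine 3-space under the projective transformation
`(u, m, c) ↦ (u + μ³ m + μ c, m, c) / (1 + μ m)`, where `μ` is the variable of `F(μ)`. It is chosen
so that coincidences of values of lines become incidences, while distinct points get distinct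
levels. -/
noncomputable def liftLine (l : F × F) (u : F) : LevelLine (RatFunc F) where
  level := (RatFunc.C u + RatFunc.X ^ 3 * RatFunc.C l.1 + RatFunc.X * RatFunc.C l.2) /
    (1 + RatFunc.X * RatFunc.C l.1)
  slope := RatFunc.C l.1 / (1 + RatFunc.X * RatFunc.C l.1)
  intercept := RatFunc.C l.2 / (1 + RatFunc.X * RatFunc.C l.1)

lemma eq_of_level_liftLine_eq {l l' : F × F} {u u' : F}
    (h : (liftLine l u).level = (liftLine l' u').level) : l = l' ∧ u = u' := by
  obtain ⟨m, c⟩ := l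
  obtain ⟨m', c'⟩ := l'
  open Polynomial in
  have cross_multiplied : C u + C (c + m' * u) * X + C (m' * c) * X ^ 2 + C m * X ^ 3 =
      C u' + C (c' + m * u') * X + C (m * c') * X ^ 2 + C m' * X ^ 3 := by
    apply RatFunc.algebraMap_injective F
    rw [liftLine, liftLine, div_eq_div_iff (one_add_X_mul_C_ne_zero _)
      (one_add_X_mul_C_ne_zero _)] at h
    simp only [map_add, map_mul, map_pow, RatFunc.algebraMap_X, RatFunc.algebraMap_C]
    linear_combination h
  have coeff_eq (k : ℕ) := congrArg (Polynomial.coeff · k) cross_multiplied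
  simp only [Polynomial.coeff_add, Polynomial.coeff_C_mul, Polynomial.coeff_C, Polynomial.coeff_X,
    Polynomial.coeff_X_pow] at coeff_eq
  have hu : u = u' := by simpa using coeff_eq 0
  have hm : m = m' := by simpa using coeff_eq 3
  have hc : c + m' * u = c' + m * u' := by simpa using coeff_eq 1
  subst hu hm
  exact ⟨Prod.ext rfl (add_right_cancel hc), rfl⟩

lemma liftLine_meets_liftLine {l l' : F × F} {u u' : F} (h : lineValue l u = lineValue l' u') :
    (liftLine l u').Meets (liftLine l' u) := by
  have value_eq := congrArg RatFunc.C h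
  simp only [lineValue, map_add, map_mul] at value_eq
  have hl := one_add_X_mul_C_ne_zero l.1
  have hl' := one_add_X_mul_C_ne_zero l'.1
  simp only [LevelLine.Meets, liftLine]
  generalize hP : 1 + RatFunc.X * RatFunc.C l.1 = P at hl ⊢
  generalize hP' : 1 + RatFunc.X * RatFunc.C l'.1 = P' at hl' ⊢
  field_simp
  rw [← hP, ← hP']
  linear_combination value_eq

lemma one_sub_X_mul_slope_liftLine (l : F × F) (u : F) :
    1 - RatFunc.X * (liftLine l u).slope = (1 + RatFunc.X * RatFunc.C l.1)⁻¹ := by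
  have := one_add_X_mul_C_ne_zero l.1
  rw [liftLine]
  field_simp
  ring

section FractionalLinear

variable {K ι : Type*} [Field K] {α β α' β' δ ε : K} {t x y : ι → K}

lemma sub_mul_mul_eq_of_fractional_linear (hx : ∀ i, x i * (δ + ε * t i) = α + β * t i) (i j : ι) :
    (x j - x i) * ((δ + ε * t i) * (δ + ε * t j)) = (β * δ - α * ε) * (t j - t i) := by
  linear_combination (δ + ε * t i) * hx j - (δ + ε * t j) * hx i

lemma sub_mul_sub_eq_of_fractional_linear (h0 : ∀ i, δ + ε * t i ≠ 0)
    (hx : ∀ i, x i * (δ + ε * t i) = α + β * t i) (hy : ∀ i, y i * (δ + ε * t i) = α' + β' * t i)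
    (i j k : ι) : (x j - x i) * (y k - y i) = (y j - y i) * (x k - x i) := by
  have hij := mul_ne_zero (h0 i) (h0 j)
  have hik := mul_ne_zero (h0 i) (h0 k)
  apply mul_right_cancel₀ (mul_ne_zero hij hik)
  rw [mul_mul_mul_comm, mul_mul_mul_comm (y j - y i)]
  simp only [sub_mul_mul_eq_of_fractional_linear hx, sub_mul_mul_eq_of_fractional_linear hy]
  ring

end FractionalLinear

/-- A regulus is a line in the coordinates `(level, slope, intercept)`, and projective
transformations preserve collinearity. -/
lemma collinear_of_liftLine_mem_regulus {a b c d : RatFunc F} {q₁ q₂ q₃ : (F × F) × F}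
    (h₁ : liftLine q₁.1 q₁.2 ∈ LevelLine.regulus a b c d)
    (h₂ : liftLine q₂.1 q₂.2 ∈ LevelLine.regulus a b c d)
    (h₃ : liftLine q₃.1 q₃.2 ∈ LevelLine.regulus a b c d) :
    (q₂.2 - q₁.2) * (q₃.1.1 - q₁.1.1) = (q₂.1.1 - q₁.1.1) * (q₃.2 - q₁.2) ∧
      (q₂.2 - q₁.2) * (q₃.1.2 - q₁.1.2) = (q₂.1.2 - q₁.1.2) * (q₃.2 - q₁.2) ∧
      (q₂.1.1 - q₁.1.1) * (q₃.1.2 - q₁.1.2) = (q₂.1.2 - q₁.1.2) * (q₃.1.1 - q₁.1.1) := by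
  let P := {q : (F × F) × F // liftLine q.1 q.2 ∈ LevelLine.regulus a b c d}
  let t (q : P) : RatFunc F := (liftLine q.1.1 q.1.2).level
  have denom (q : P) : (1 - RatFunc.X * b) + -(RatFunc.X * a) * t q =
      (1 + RatFunc.X * RatFunc.C q.1.1.1)⁻¹ := by
    rw [← one_sub_X_mul_slope_liftLine, q.2.1]
    ring
  have denom_ne_zero (q : P) : (1 - RatFunc.X * b) + -(RatFunc.X * a) * t q ≠ 0 :=
    denom q ▸ inv_ne_zero (one_add_X_mul_C_ne_zero _)
  have hm (q : P) : RatFunc.C q.1.1.1 * ((1 - RatFunc.X * b) + -(RatFunc.X * a) * t q) =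
      b + a * t q := by
    rw [denom, ← div_eq_mul_inv]
    exact q.2.1.trans (add_comm _ _)
  have hc (q : P) : RatFunc.C q.1.1.2 * ((1 - RatFunc.X * b) + -(RatFunc.X * a) * t q) =
      d + c * t q := by
    rw [denom, ← div_eq_mul_inv]
    exact q.2.2.trans (add_comm _ _)
  have hu (q : P) : RatFunc.C q.1.2 * ((1 - RatFunc.X * b) + -(RatFunc.X * a) * t q) =
      -(RatFunc.X ^ 3 * b + RatFunc.X * d) + (1 - RatFunc.X ^ 3 * a - RatFunc.X * c) * t q := by
    have level_eq : t q = (RatFunc.C q.1.2 + RatFunc.X ^ 3 * RatFunc.C q.1.1.1 +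
        RatFunc.X * RatFunc.C q.1.1.2) * ((1 - RatFunc.X * b) + -(RatFunc.X * a) * t q) := by
      rw [denom, ← div_eq_mul_inv]
      rfl
    linear_combination -level_eq - RatFunc.X ^ 3 * hm q - RatFunc.X * hc q
  have minor {x y : P → F} {α β α' β' : RatFunc F}
      (hx : ∀ q, RatFunc.C (x q) * ((1 - RatFunc.X * b) + -(RatFunc.X * a) * t q) = α + β * t q)
      (hy : ∀ q, RatFunc.C (y q) * ((1 - RatFunc.X * b) + -(RatFunc.X * a) * t q) = α' + β' * t q)
      (i j k : P) : (x j - x i) * (y k - y i) = (y j - y i) * (x k - x i) := by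
    apply RatFunc.C_injective
    simpa only [map_mul, map_sub] using
      sub_mul_sub_eq_of_fractional_linear denom_ne_zero hx hy i j k
  exact ⟨minor hu hm ⟨q₁, h₁⟩ ⟨q₂, h₂⟩ ⟨q₃, h₃⟩, minor hu hc ⟨q₁, h₁⟩ ⟨q₂, h₂⟩ ⟨q₃, h₃⟩,
    minor hm hc ⟨q₁, h₁⟩ ⟨q₂, h₂⟩ ⟨q₃, h₃⟩⟩

open Classical in
lemma regulusBounded_image_liftLine {κ : ℝ} {L : Finset (F × F)} {U : Finset F}
    (hL : PencilBounded κ L) (hU : #U ≤ κ) :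
    LevelLine.RegulusBounded κ ((L ×ˢ U).image fun q => liftLine q.1 q.2) := by
  intro T hT a b c d hreg
  obtain ⟨Q, hQ, rfl⟩ := subset_image_iff.1 hT
  refine le_trans (mod_cast card_image_le) (?_ : (#Q : ℝ) ≤ κ)
  have collinear {q₁ q₂ q₃} (h₁ : q₁ ∈ Q) (h₂ : q₂ ∈ Q) (h₃ : q₃ ∈ Q) :=
    collinear_of_liftLine_mem_regulus (hreg _ (mem_image_of_mem _ h₁))
      (hreg _ (mem_image_of_mem _ h₂)) (hreg _ (mem_image_of_mem _ h₃))
  by_cases distinct_snd : Set.InjOn Prod.snd (Q : Set ((F × F) × F))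
  · have : #Q ≤ #U := card_le_card_of_injOn Prod.snd
      (fun q hq => (mem_product.1 (hQ hq)).2) distinct_snd
    exact le_trans (mod_cast this) hU
  simp only [Set.InjOn, not_forall, mem_coe] at distinct_snd
  obtain ⟨q₁, h₁, q₂, h₂, hu, hne⟩ := distinct_snd
  have direction_ne_zero : q₂.1.2 - q₁.1.2 ≠ 0 ∨ q₁.1.1 - q₂.1.1 ≠ 0 := by
    contrapose! hne
    exact Prod.ext (Prod.ext (sub_eq_zero.1 hne.2) (sub_eq_zero.1 hne.1).symm) hu
  have snd_eq {q} (hq : q ∈ Q) : q.2 = q₁.2 := by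
    obtain ⟨hm, hc, -⟩ := collinear h₁ h₂ hq
    rw [hu, sub_self, zero_mul, eq_comm, mul_eq_zero] at hm hc
    rw [hu, ← sub_eq_zero]
    rcases direction_ne_zero with h | h
    · exact hc.resolve_left h
    · exact hm.resolve_left fun h' => h (by rw [← neg_sub, h', neg_zero])
  rw [← card_image_of_injOn (s := Q) (f := Prod.fst) fun q hq q' hq' h =>
    Prod.ext h ((snd_eq hq).trans (snd_eq hq').symm)]
  refine hL _ (fun l hl => ?_) _ _ ((q₂.1.2 - q₁.1.2) * q₁.1.1 + (q₁.1.1 - q₂.1.1) * q₁.1.2)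
    direction_ne_zero fun l hl => ?_
  all_goals obtain ⟨q, hq, rfl⟩ := mem_image.1 hl
  · exact (mem_product.1 (hQ hq)).1
  · linear_combination -(collinear h₁ h₂ hq).2.2

variable [DecidableEq F]

/-- The number of coincidences `l(u) = l'(u')` with `l, l' ∈ L` and `u, u' ∈ U`. -/
def lineEnergy (L : Finset (F × F)) (U : Finset F) : ℕ :=
  #{x ∈ (L ×ˢ U) ×ˢ L ×ˢ U | lineValue x.1.1 x.1.2 = lineValue x.2.1 x.2.2}

lemma lineEnergy_le_incidenceCount [DecidableEq (RatFunc F)] (L : Finset (F × F)) (U : Finset F) :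
    lineEnergy L U ≤ LevelLine.incidenceCount ((L ×ˢ U).image fun q => liftLine q.1 q.2)
      ((L ×ˢ U).image fun q => liftLine q.1 q.2) := by
  rw [lineEnergy, LevelLine.incidenceCount, ← card_sigma]
  refine card_le_card_of_injOn (fun x => ⟨liftLine x.1.1 x.2.2, liftLine x.2.1 x.1.2⟩) ?_ ?_
  · intro x hx
    obtain ⟨hx, value_eq⟩ := mem_filter.1 hx
    simp only [mem_product] at hx
    exact mem_sigma.2 ⟨mem_image.2 ⟨(x.1.1, x.2.2), mem_product.2 ⟨hx.1.1, hx.2.2⟩, rfl⟩,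
      mem_filter.2 ⟨mem_image.2 ⟨(x.2.1, x.1.2), mem_product.2 ⟨hx.2.1, hx.1.2⟩, rfl⟩,
        liftLine_meets_liftLine value_eq⟩⟩
  · intro x _ y _ hxy
    simp only [Sigma.mk.injEq, heq_eq_eq] at hxy
    obtain ⟨hl, hu'⟩ := eq_of_level_liftLine_eq (congrArg LevelLine.level hxy.1)
    obtain ⟨hl', hu⟩ := eq_of_level_liftLine_eq (congrArg LevelLine.level hxy.2)
    exact Prod.ext (Prod.ext hl hu) (Prod.ext hl' hu')

theorem lineEnergy_le {κ : ℝ} {L : Finset (F × F)} {U : Finset F} {p : ℕ} [CharP F p] (hκ : 1 ≤ κ)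
    (hL : PencilBounded κ L) (hU : #U ≤ κ) (hp : #L * #U ≤ p ^ 2) :
    lineEnergy L U ≤ incidenceBound κ (#L * #U) (#L * #U) := by
  classical
  have level_inj {q q' : (F × F) × F}
      (h : (liftLine q.1 q.2).level = (liftLine q'.1 q'.2).level) : q = q' :=
    Prod.ext (eq_of_level_liftLine_eq h).1 (eq_of_level_liftLine_eq h).2
  have hinj : Set.InjOn LevelLine.level
      ((L ×ˢ U).image fun q => liftLine q.1 q.2 : Set (LevelLine (RatFunc F))) := by
    rw [coe_image]
    rintro _ ⟨q, -, rfl⟩ _ ⟨q', -, rfl⟩ h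
    exact level_inj h ▸ rfl
  have hcard : #((L ×ˢ U).image fun q => liftLine q.1 q.2) = #L * #U := by
    rw [card_image_of_injective _ fun q q' h => level_inj (congrArg LevelLine.level h),
      card_product]
  have hreg := regulusBounded_image_liftLine hL hU
  have := LevelLine.incidenceCount_le_incidenceBound hκ hinj hinj hreg hreg (hcard ▸ hp)
    (hcard ▸ hp)
  rw [hcard, Nat.cast_mul] at this
  exact le_trans (mod_cast lineEnergy_le_incidenceCount L U) this

end LineEnergy

section Reduction

open scoped Pointwise Combinatorics.Additive

variable {F : Type*} [Field F]

/-- The line `u ↦ b - b² u`. At `u = (a + b)⁻¹` it takes the value `(a⁻¹ + b⁻¹)⁻¹`, which turns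
equal sums of reciprocals into coincidences of values of lines. -/
def reciprocalLine (b : F) : F × F := (-b ^ 2, b)

/-- The line `u ↦ v` on which `reciprocalLine x.1` at `u` and `reciprocalLine x.2` at `v` have equal
values. -/
def transitionLine (x : F × F) : F × F := ((x.1 / x.2) ^ 2, (x.2 - x.1) / x.2 ^ 2)

lemma lineValue_reciprocalLine {x y : F} (hx : x ≠ 0) (hy : y ≠ 0) (hxy : x + y ≠ 0) :
    lineValue (reciprocalLine y⁻¹) (x⁻¹ + y⁻¹)⁻¹ = (x + y)⁻¹ := by
  have : x⁻¹ + y⁻¹ = (x + y) / (x * y) := by field_simp; ring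
  rw [this, lineValue, reciprocalLine]
  field_simp
  ring

lemma lineValue_transitionLine_eq_iff {b₁ b₂ u₁ u₂ : F} (hb₂ : b₂ ≠ 0) :
    lineValue (transitionLine (b₁, b₂)) u₁ = u₂ ↔
      lineValue (reciprocalLine b₁) u₁ = lineValue (reciprocalLine b₂) u₂ := by
  simp only [lineValue, transitionLine, reciprocalLine]
  field_simp
  constructor <;> intro h <;> linear_combination -h

lemma transitionLine_snd {x : F × F} (h : x.2 ≠ 0) :
    (transitionLine x).2 = (1 - x.1 / x.2) * x.2⁻¹ := by
  rw [transitionLine]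
  field_simp

variable [DecidableEq F] {A B : Finset F}

/-- The number of points of the line `l` in the grid `U × U`. -/
def gridCount (U : Finset F) (l : F × F) : ℕ := #{u ∈ U | lineValue l u ∈ U}

lemma ne_zero_of_mem_inv (hA : (0 : F) ∉ A) {x : F} (hx : x ∈ A⁻¹) : x ≠ 0 := by
  rintro rfl
  exact hA (by simpa using mem_inv'.1 hx)

lemma card_filter_add_eq_zero_le (X Y : Finset F) :
    #{x ∈ (X ×ˢ X) ×ˢ Y ×ˢ Y | x.1.1 + x.2.1 = 0 ∧ x.1.2 + x.2.2 = 0} ≤ #X ^ 2 := by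
  rw [sq, ← card_product]
  refine card_le_card_of_injOn Prod.fst (fun x hx => (mem_product.1 (mem_filter.1 hx).1).1) ?_
  intro x hx y hy hxy
  obtain ⟨-, hx₁, hx₂⟩ := mem_filter.1 hx
  obtain ⟨-, hy₁, hy₂⟩ := mem_filter.1 hy
  rw [← hxy] at hy₁ hy₂
  exact Prod.ext hxy (Prod.ext (add_left_cancel (hx₁.trans hy₁.symm))
    (add_left_cancel (hx₂.trans hy₂.symm)))

lemma card_filter_add_ne_zero_le (hA : (0 : F) ∉ A) (hB : (0 : F) ∉ B) :
    #{x ∈ (A⁻¹ ×ˢ A⁻¹) ×ˢ B⁻¹ ×ˢ B⁻¹ | x.1.1 + x.2.1 = x.1.2 + x.2.2 ∧ x.1.1 + x.2.1 ≠ 0} ≤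
      ∑ x ∈ B ×ˢ B, gridCount (A + B)⁻¹ (transitionLine x) := by
  simp only [gridCount]
  rw [← card_sigma]
  refine card_le_card_of_injOn (fun x => ⟨(x.2.1⁻¹, x.2.2⁻¹), (x.1.1⁻¹ + x.2.1⁻¹)⁻¹⟩) ?_ ?_
  · rintro ⟨⟨x₁, x₂⟩, y₁, y₂⟩ h
    simp only [coe_filter, mem_product, Set.mem_ofPred_eq] at h
    obtain ⟨⟨⟨hx₁, hx₂⟩, hy₁, hy₂⟩, sum_eq, sum_ne⟩ := h
    have value : lineValue (transitionLine (y₁⁻¹, y₂⁻¹)) (x₁⁻¹ + y₁⁻¹)⁻¹ = (x₂⁻¹ + y₂⁻¹)⁻¹ := by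
      rw [lineValue_transitionLine_eq_iff (inv_ne_zero (ne_zero_of_mem_inv hB hy₂)),
        lineValue_reciprocalLine (ne_zero_of_mem_inv hA hx₁) (ne_zero_of_mem_inv hB hy₁) sum_ne,
        lineValue_reciprocalLine (ne_zero_of_mem_inv hA hx₂) (ne_zero_of_mem_inv hB hy₂)
          (sum_eq ▸ sum_ne), sum_eq]
    rw [mem_inv'] at hx₁ hx₂ hy₁ hy₂
    exact mem_sigma.2 ⟨mem_product.2 ⟨hy₁, hy₂⟩, mem_filter.2 ⟨inv_mem_inv (add_mem_add hx₁ hy₁),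
      value ▸ inv_mem_inv (add_mem_add hx₂ hy₂)⟩⟩
  · rintro ⟨⟨x₁, x₂⟩, y₁, y₂⟩ h ⟨⟨x₁', x₂'⟩, y₁', y₂'⟩ h' hxy
    simp only [Sigma.mk.injEq, Prod.mk.injEq, heq_eq_eq, inv_inj] at hxy
    obtain ⟨⟨rfl, rfl⟩, hx₁⟩ := hxy
    obtain rfl := inv_inj.1 (add_right_cancel hx₁)
    obtain rfl : x₂ = x₂' :=
      add_right_cancel ((mem_filter.1 h).2.1.symm.trans (mem_filter.1 h').2.1)
    rfl

lemma addEnergy_inv_inv_le_sum (hA : (0 : F) ∉ A) (hB : (0 : F) ∉ B) :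
    E[A⁻¹, B⁻¹] ≤ #A ^ 2 + ∑ x ∈ B ×ˢ B, gridCount (A + B)⁻¹ (transitionLine x) := by
  rw [addEnergy, ← card_filter_add_card_filter_not fun x : (F × F) × F × F => x.1.1 + x.2.1 = 0,
    filter_filter, filter_filter]
  refine add_le_add ?_ (card_filter_add_ne_zero_le hA hB)
  refine le_trans (card_le_card fun x hx => ?_)
    ((card_filter_add_eq_zero_le A⁻¹ B⁻¹).trans_eq (by rw [card_inv]))
  obtain ⟨hx, sum_eq, sum_zero⟩ := mem_filter.1 hx
  exact mem_filter.2 ⟨hx, sum_zero, sum_eq ▸ sum_zero⟩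

lemma gridCount_le_card (U : Finset F) (l : F × F) : gridCount U l ≤ #U := card_filter_le _ _

lemma addEnergy_inv_inv_le_add_sum_gridCount (hA : (0 : F) ∉ A) (hB : (0 : F) ∉ B) :
    E[A⁻¹, B⁻¹] ≤ #A ^ 2 + #B * #(A + B) +
      ∑ x ∈ B.offDiag, gridCount (A + B)⁻¹ (transitionLine x) := by
  have diagonal : ∑ x ∈ B.diag, gridCount (A + B)⁻¹ (transitionLine x) ≤ #B * #(A + B) := by
    rw [← diag_card B, ← card_inv (A + B)]
    exact sum_le_card_nsmul _ _ _ fun x _ => gridCount_le_card _ _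
  have := addEnergy_inv_inv_le_sum hA hB
  rw [← diag_union_offDiag, sum_union (disjoint_diag_offDiag B)] at this
  omega

lemma card_fiber_transitionLine_le_two (hB : (0 : F) ∉ B) (l : F × F) :
    #{x ∈ B.offDiag | transitionLine x = l} ≤ 2 := by
  rcases eq_empty_or_nonempty {x ∈ B.offDiag | transitionLine x = l} with h | ⟨x₀, hx₀⟩
  · simp [h]
  refine (card_le_card_of_injOn (fun x => x.1 / x.2) (t := {x₀.1 / x₀.2, -(x₀.1 / x₀.2)})
    ?_ ?_).trans card_le_two
  · intro x hx
    have sq_eq : (x.1 / x.2) ^ 2 = (x₀.1 / x₀.2) ^ 2 :=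
      congrArg Prod.fst ((mem_filter.1 hx).2.trans (mem_filter.1 hx₀).2.symm)
    simpa using sq_eq_sq_iff_eq_or_eq_neg.1 sq_eq
  · intro x hx y hy (ratio_eq : x.1 / x.2 = y.1 / y.2)
    obtain ⟨hxB, hxl⟩ := mem_filter.1 hx
    obtain ⟨hyB, hyl⟩ := mem_filter.1 hy
    have hx2 : x.2 ≠ 0 := ne_of_mem_of_not_mem (mem_offDiag.1 hxB).2.1 hB
    have hy2 : y.2 ≠ 0 := ne_of_mem_of_not_mem (mem_offDiag.1 hyB).2.1 hB
    have ratio_ne_one : 1 - y.1 / y.2 ≠ 0 := by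
      rw [sub_ne_zero, ne_comm, Ne, div_eq_one_iff_eq hy2]
      exact (mem_offDiag.1 hyB).2.2
    have snd_eq : x.2 = y.2 := by
      have := congrArg Prod.snd (hxl.trans hyl.symm)
      rwa [transitionLine_snd hx2, transitionLine_snd hy2, ratio_eq,
        mul_right_inj' ratio_ne_one, inv_inj] at this
    rw [snd_eq, div_left_inj' hy2] at ratio_eq
    exact Prod.ext ratio_eq snd_eq

lemma sum_comp_transitionLine_le (hB : (0 : F) ∉ B) {f : F × F → ℝ} (hf : ∀ l, 0 ≤ f l) :
    ∑ x ∈ B.offDiag, f (transitionLine x) ≤ 2 * ∑ l ∈ B.offDiag.image transitionLine, f l := by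
  rw [sum_comp, mul_sum]
  refine sum_le_sum fun l _ => ?_
  rw [nsmul_eq_mul]
  exact mul_le_mul_of_nonneg_right (mod_cast card_fiber_transitionLine_le_two hB l) (hf l)

lemma card_quadratic_roots_le_two (S : Finset F) {α β γ : F} (h : α ≠ 0 ∨ β ≠ 0) :
    #{b ∈ S | α * b ^ 2 + β * b + γ = 0} ≤ 2 := by
  open Polynomial in
  have ne_zero : C α * X ^ 2 + C β * X + C γ ≠ 0 := by
    intro h0
    have coeff_eq (k : ℕ) := congrArg (coeff · k) h0
    rcases h with h | h
    · exact h (by simpa [coeff_X, coeff_C] using coeff_eq 2)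
    · exact h (by simpa [coeff_X, coeff_C] using coeff_eq 1)
  refine (Polynomial.card_le_degree_of_subset_roots fun b hb => ?_).trans
    (Polynomial.natDegree_quadratic_le (a := α) (b := β) (c := γ))
  rw [Polynomial.mem_roots ne_zero]
  simpa using (mem_filter.1 hb).2

lemma pencilBounded_image_transitionLine (hB : (0 : F) ∉ B) :
    PencilBounded (2 * #B) (B.offDiag.image transitionLine) := by
  intro T hT α β γ hαβ hpencil
  obtain ⟨S, hS, rfl⟩ := subset_image_iff.1 hT
  refine le_trans (mod_cast card_image_le) (?_ : (#S : ℝ) ≤ 2 * #B)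
  norm_cast
  refine card_le_mul_card_image_of_maps_to (f := Prod.snd)
    (fun x hx => (mem_offDiag.1 (hS hx)).2.1) 2 fun b hb => ?_
  refine (card_le_card_of_injOn Prod.fst ?_ ?_).trans (card_quadratic_roots_le_two B
    (α := α) (β := -β) (γ := β * b - γ * b ^ 2) (by simpa using hαβ))
  · intro x hx
    obtain ⟨hxS, rfl⟩ := mem_filter.1 hx
    have hx2 : x.2 ≠ 0 := ne_of_mem_of_not_mem hb hB
    have := hpencil _ (mem_image_of_mem _ hxS)
    refine mem_filter.2 ⟨(mem_offDiag.1 (hS hxS)).1, ?_⟩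
    rw [transitionLine] at this
    field_simp at this
    linear_combination this
  · intro x hx y hy hxy
    exact Prod.ext hxy ((mem_filter.1 hx).2.trans (mem_filter.1 hy).2.symm)

end Reduction

section GridCounts

variable {F : Type*} [Field F] [DecidableEq F] {B U : Finset F}

lemma sum_gridCount_eq_sum_card_fiber (L : Finset (F × F)) (U : Finset F) :
    ∑ l ∈ L, gridCount U l = ∑ v ∈ U, #{q ∈ L ×ˢ U | lineValue q.1 q.2 = v} := by
  rw [sum_card_fiberwise_eq_card_filter]
  simp only [gridCount, card_filter, sum_product]

lemma sum_card_fiber_sq_le_lineEnergy (L : Finset (F × F)) (U V : Finset F) :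
    ∑ v ∈ V, #{q ∈ L ×ˢ U | lineValue q.1 q.2 = v} ^ 2 ≤ lineEnergy L U := by
  have fiber_sq (v : F) : #{q ∈ L ×ˢ U | lineValue q.1 q.2 = v} ^ 2 =
      #{x ∈ {x ∈ (L ×ˢ U) ×ˢ L ×ˢ U | lineValue x.1.1 x.1.2 = lineValue x.2.1 x.2.2} |
        lineValue x.1.1 x.1.2 = v} := by
    rw [sq, ← card_product, ← filter_product, filter_filter]
    congr! 2
    grind
  simp only [fiber_sq, lineEnergy]
  rw [sum_card_fiberwise_eq_card_filter]
  exact card_filter_le _ _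

lemma sq_sum_gridCount_le (L : Finset (F × F)) (U : Finset F) :
    (∑ l ∈ L, gridCount U l) ^ 2 ≤ #U * lineEnergy L U := by
  rw [sum_gridCount_eq_sum_card_fiber]
  exact sq_sum_le_card_mul_sum_sq.trans
    (Nat.mul_le_mul_left _ (sum_card_fiber_sq_le_lineEnergy L U U))

section SecondMoment

variable [Fintype F]

lemma card_filter_lineValue_mem (U : Finset F) (u : F) :
    #{l : F × F | lineValue l u ∈ U} = Fintype.card F * #U := by
  rw [← card_univ, ← card_product]
  have bijective : Function.Bijective fun l : F × F => (l.1, lineValue l u) :=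
    Function.bijective_iff_has_inverse.2
      ⟨fun x => (x.1, x.2 - x.1 * u), fun l => by simp [lineValue], fun x => by simp [lineValue]⟩
  exact card_bijective _ bijective fun l => by
    rw [mem_filter_univ, mem_product, and_iff_right (mem_univ _)]

lemma card_filter_lineValue_mem_and_mem_le (U : Finset F) {u v : F} (huv : u ≠ v) :
    #{l : F × F | lineValue l u ∈ U ∧ lineValue l v ∈ U} ≤ #U ^ 2 := by
  rw [sq, ← card_product]
  refine card_le_card_of_injOn (fun l => (lineValue l u, lineValue l v))
    (fun l hl => mem_product.2 (mem_filter.1 hl).2) fun l _ l' _ h => ?_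
  simp only [lineValue, Prod.mk.injEq] at h
  have slope_eq : l.1 = l'.1 :=
    mul_right_cancel₀ (sub_ne_zero.2 huv) (by linear_combination h.1 - h.2)
  exact Prod.ext slope_eq (by linear_combination h.1 - u * slope_eq)

lemma sum_gridCount (U : Finset F) :
    ∑ l : F × F, gridCount U l = Fintype.card F * #U ^ 2 := by
  have swap : ∑ l : F × F, gridCount U l = ∑ u ∈ U, #{l : F × F | lineValue l u ∈ U} :=
    sum_card_bipartiteAbove_eq_sum_card_bipartiteBelow fun l u => lineValue l u ∈ U
  simp only [swap, card_filter_lineValue_mem, sum_const, smul_eq_mul]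
  ring

lemma sum_sq_gridCount_eq (U : Finset F) :
    ∑ l : F × F, gridCount U l ^ 2 =
      ∑ x ∈ U ×ˢ U, #{l : F × F | lineValue l x.1 ∈ U ∧ lineValue l x.2 ∈ U} := by
  have sq_eq (l : F × F) : gridCount U l ^ 2 =
      #{x ∈ U ×ˢ U | lineValue l x.1 ∈ U ∧ lineValue l x.2 ∈ U} := by
    rw [gridCount, sq, ← card_product, ← filter_product]
  simp only [sq_eq, card_filter]
  exact sum_comm

lemma sum_sq_gridCount_le (U : Finset F) :
    ∑ l : F × F, gridCount U l ^ 2 ≤ Fintype.card F * #U ^ 2 + #U ^ 4 := by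
  have diagonal : ∑ x ∈ U.diag, #{l : F × F | lineValue l x.1 ∈ U ∧ lineValue l x.2 ∈ U} =
      Fintype.card F * #U ^ 2 := by
    simp only [sum_diag, and_self, card_filter_lineValue_mem, sum_const, smul_eq_mul]
    ring
  have off_diagonal : ∑ x ∈ U.offDiag, #{l : F × F | lineValue l x.1 ∈ U ∧ lineValue l x.2 ∈ U} ≤
      #U ^ 4 :=
    calc _ ≤ #U.offDiag • #U ^ 2 := sum_le_card_nsmul _ _ _ fun x hx =>
          card_filter_lineValue_mem_and_mem_le U (mem_offDiag.1 hx).2.2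
      _ ≤ #U ^ 2 * #U ^ 2 := Nat.mul_le_mul_right _ (card_offDiag_le_sq U)
      _ = #U ^ 4 := by ring
  rw [sum_sq_gridCount_eq, ← diag_union_offDiag, sum_union (disjoint_diag_offDiag U), diagonal]
  exact Nat.add_le_add_left off_diagonal _

lemma sum_sq_gridCount_sub_le (U : Finset F) :
    ∑ l : F × F, ((gridCount U l : ℝ) - #U ^ 2 / Fintype.card F) ^ 2 ≤
      Fintype.card F * #U ^ 2 := by
  have first_moment : ∑ l : F × F, (gridCount U l : ℝ) = Fintype.card F * #U ^ 2 :=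
    mod_cast sum_gridCount U
  have second_moment : ∑ l : F × F, (gridCount U l : ℝ) ^ 2 ≤
      Fintype.card F * #U ^ 2 + #U ^ 4 := mod_cast sum_sq_gridCount_le U
  have : (0 : ℝ) < Fintype.card F := mod_cast Fintype.card_pos
  calc ∑ l : F × F, ((gridCount U l : ℝ) - #U ^ 2 / Fintype.card F) ^ 2
      = ∑ l : F × F, (gridCount U l : ℝ) ^ 2 - #U ^ 4 := by
        simp only [sub_sq, sum_add_distrib, sum_sub_distrib, ← sum_mul, ← mul_sum, first_moment,
          sum_const, card_univ, Fintype.card_prod, nsmul_eq_mul, Nat.cast_mul]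
        field_simp
        ring
    _ ≤ Fintype.card F * #U ^ 2 := by linarith

lemma sum_gridCount_transitionLine_le_of_variance (hB : (0 : F) ∉ B) :
    ∑ x ∈ B.offDiag, (gridCount U (transitionLine x) : ℝ) ≤
      #B ^ 2 * #U ^ 2 / Fintype.card F + #B * #U * √(2 * Fintype.card F) := by
  set mean : ℝ := #U ^ 2 / Fintype.card F with hmean
  have split : ∑ x ∈ B.offDiag, (gridCount U (transitionLine x) : ℝ) = #B.offDiag * mean +
      ∑ x ∈ B.offDiag, ((gridCount U (transitionLine x) : ℝ) - mean) := by
    rw [sum_sub_distrib, sum_const, nsmul_eq_mul]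
    ring
  have main_term : #B.offDiag * mean ≤ #B ^ 2 * mean := by
    gcongr
    exact_mod_cast card_offDiag_le_sq B
  have variance : ∑ x ∈ B.offDiag, ((gridCount U (transitionLine x) : ℝ) - mean) ^ 2 ≤
      2 * (Fintype.card F * #U ^ 2) := by
    refine (sum_comp_transitionLine_le hB fun l => sq_nonneg ((gridCount U l : ℝ) - mean)).trans ?_
    gcongr
    exact (sum_le_sum_of_subset_of_nonneg (subset_univ _) fun _ _ _ => sq_nonneg _).trans
      (sum_sq_gridCount_sub_le U)
  have error_term : ∑ x ∈ B.offDiag, ((gridCount U (transitionLine x) : ℝ) - mean) ≤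
      #B * #U * √(2 * Fintype.card F) := by
    refine (abs_le_of_sq_le_sq' ?_ (by positivity)).2
    calc _ ≤ #B.offDiag * ∑ x ∈ B.offDiag, ((gridCount U (transitionLine x) : ℝ) - mean) ^ 2 :=
          sq_sum_le_card_mul_sum_sq
      _ ≤ #B ^ 2 * (2 * (Fintype.card F * #U ^ 2)) := by
          gcongr
          exact_mod_cast card_offDiag_le_sq B
      _ = (#B * #U * √(2 * Fintype.card F)) ^ 2 := by
          rw [mul_pow, Real.sq_sqrt (by positivity)]
          ring
  rw [split, mul_div_assoc, ← hmean]
  linarith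

end SecondMoment

lemma incidenceBound_self_le {q r m : ℝ} (hqr : q ^ 4 ≤ r ^ 4)
    (_ : 0 ≤ m) (hm : m ≤ q ^ 4 * r ^ 4) :
    incidenceBound (2 * q ^ 4) m m ≤ 2 ^ 22 * (q ^ 6 * r ^ 6) := by
  have sqrt_le : √m ≤ q ^ 2 * r ^ 2 :=
    Real.sqrt_le_iff.2 ⟨by positivity, hm.trans_eq (by ring)⟩
  have sq_le : q ^ 2 ≤ r ^ 2 :=
    le_of_sq_le_sq (by simpa only [← pow_mul] using hqr) (by positivity)
  have polynomial_term : m * √m ≤ q ^ 6 * r ^ 6 :=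
    calc m * √m ≤ (q ^ 4 * r ^ 4) * (q ^ 2 * r ^ 2) := by gcongr
      _ = q ^ 6 * r ^ 6 := by ring
  have regulus_term : q ^ 4 * m ≤ q ^ 6 * r ^ 6 :=
    calc q ^ 4 * m ≤ q ^ 4 * (q ^ 4 * r ^ 4) := by gcongr
      _ = q ^ 6 * r ^ 4 * q ^ 2 := by ring
      _ ≤ q ^ 6 * r ^ 4 * r ^ 2 := by gcongr
      _ = q ^ 6 * r ^ 6 := by ring
  have : 0 ≤ q ^ 6 * r ^ 6 := by positivity
  rw [incidenceBound]
  linarith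

lemma sum_gridCount_transitionLine_le_of_incidences {p : ℕ} [CharP F p] (hB : (0 : F) ∉ B)
    {q r : ℝ} (hq : 1 ≤ q) (hr : 0 ≤ r) (hBr : #B ≤ r ^ 2) (hrq : r ^ 2 ≤ q ^ 4)
    (hU : #U ≤ q ^ 4) (hp : q ^ 4 * r ^ 4 ≤ p ^ 2) (hqr : q ^ 4 ≤ r ^ 4) :
    ∑ x ∈ B.offDiag, (gridCount U (transitionLine x) : ℝ) ≤ 2 ^ 12 * (q ^ 5 * r ^ 3) := by
  set L := B.offDiag.image transitionLine with hL
  have card_L_le : (#L : ℝ) ≤ r ^ 4 :=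
    calc (#L : ℝ) ≤ #B.offDiag := mod_cast card_image_le
      _ ≤ #B ^ 2 := mod_cast card_offDiag_le_sq B
      _ ≤ (r ^ 2) ^ 2 := by gcongr
      _ = r ^ 4 := by ring
  have card_mul_le : (#L : ℝ) * #U ≤ q ^ 4 * r ^ 4 :=
    calc (#L : ℝ) * #U ≤ r ^ 4 * q ^ 4 := by gcongr
      _ = q ^ 4 * r ^ 4 := mul_comm _ _
  have one_le : 1 ≤ q ^ 4 := one_le_pow₀ hq
  have pencilBounded : PencilBounded (2 * q ^ 4) L := fun T hT α β γ h hpencil =>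
    (pencilBounded_image_transitionLine hB T hT α β γ h hpencil).trans (by linarith)
  have energy_le : (lineEnergy L U : ℝ) ≤ 2 ^ 22 * (q ^ 6 * r ^ 6) :=
    (lineEnergy_le (by linarith) pencilBounded (by linarith)
      (mod_cast card_mul_le.trans hp)).trans
      (incidenceBound_self_le hqr (by positivity) card_mul_le)
  have sum_le : ∑ l ∈ L, (gridCount U l : ℝ) ≤ 2 ^ 11 * (q ^ 5 * r ^ 3) := by
    refine (abs_le_of_sq_le_sq' ?_ (by positivity)).2
    calc (∑ l ∈ L, (gridCount U l : ℝ)) ^ 2 ≤ #U * lineEnergy L U :=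
          mod_cast sq_sum_gridCount_le L U
      _ ≤ q ^ 4 * (2 ^ 22 * (q ^ 6 * r ^ 6)) := by gcongr
      _ = (2 ^ 11 * (q ^ 5 * r ^ 3)) ^ 2 := by ring
  have := sum_comp_transitionLine_le hB (f := fun l => (gridCount U l : ℝ)) fun l => by positivity
  linarith

lemma sum_gridCount_transitionLine_le_mul (B U : Finset F) :
    ∑ x ∈ B.offDiag, (gridCount U (transitionLine x) : ℝ) ≤ #B ^ 2 * #U :=
  calc ∑ x ∈ B.offDiag, (gridCount U (transitionLine x) : ℝ) ≤ #B.offDiag * #U := by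
        rw [← nsmul_eq_mul]
        exact sum_le_card_nsmul _ _ _ fun x _ => mod_cast gridCount_le_card U _
    _ ≤ #B ^ 2 * #U := by
        gcongr
        exact_mod_cast card_offDiag_le_sq B

end GridCounts

section EnergyOfReciprocals

open scoped Pointwise Combinatorics.Additive

variable {p : ℕ} [Fact p.Prime] {A B U : Finset (ZMod p)}

lemma sum_gridCount_transitionLine_le_of_pow (hB : (0 : ZMod p) ∉ B) {q r : ℝ} (hq : 1 ≤ q)
    (hr : 0 ≤ r) (hBr : #B = r ^ 2) (hrq : r ^ 2 ≤ q ^ 4) (hU : #U ≤ q ^ 4) :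
    ∑ x ∈ B.offDiag, (gridCount U (transitionLine x) : ℝ) ≤
      (q ^ 4) ^ 2 * #B ^ 2 / p + 2 ^ 12 * (q ^ 5 * r ^ 3) + (q ^ 4) ^ 2 := by
  have main_nonneg : 0 ≤ (q ^ 4) ^ 2 * (#B : ℝ) ^ 2 / p := by positivity
  have incidence_nonneg : 0 ≤ q ^ 5 * r ^ 3 := by positivity
  have trivial_nonneg : 0 ≤ (q ^ 4) ^ 2 := by positivity
  rcases le_total (q ^ 4 * r ^ 4) ((p : ℝ) ^ 2) with small | large
  · rcases le_total (q ^ 4) (r ^ 4) with balanced | unbalanced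
    · linarith [sum_gridCount_transitionLine_le_of_incidences hB hq hr hBr.le hrq hU small balanced]
    · have trivial_le : (#B : ℝ) ^ 2 * #U ≤ (q ^ 4) ^ 2 :=
        calc (#B : ℝ) ^ 2 * #U = r ^ 4 * #U := by rw [hBr]; ring
          _ ≤ q ^ 4 * q ^ 4 := by gcongr
          _ = (q ^ 4) ^ 2 := by ring
      linarith [sum_gridCount_transitionLine_le_mul B U]
  · have main_le : (#B : ℝ) ^ 2 * #U ^ 2 / p ≤ (q ^ 4) ^ 2 * #B ^ 2 / p := by
      rw [mul_comm]
      gcongr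
    have p_le : (p : ℝ) ≤ (q * r) ^ 2 := le_of_sq_le_sq (large.trans_eq (by ring)) (by positivity)
    have sqrt_le : √(2 * p) ≤ 2 * (q * r) :=
      Real.sqrt_le_iff.2 ⟨by positivity, by linarith [sq_nonneg (q * r)]⟩
    have error_le : #B * #U * √(2 * p) ≤ 2 * (q ^ 5 * r ^ 3) :=
      calc #B * #U * √(2 * p) ≤ r ^ 2 * q ^ 4 * (2 * (q * r)) := by
            rw [hBr]
            gcongr
        _ = 2 * (q ^ 5 * r ^ 3) := by ring
    have variance_le := sum_gridCount_transitionLine_le_of_variance (U := U) hB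
    rw [ZMod.card] at variance_le
    linarith

lemma sum_gridCount_transitionLine_le (hB : (0 : ZMod p) ∉ B) (hB₀ : B.Nonempty) {s : ℝ}
    (hBs : #B ≤ s) (hU : #U ≤ s) :
    ∑ x ∈ B.offDiag, (gridCount U (transitionLine x) : ℝ) ≤
      s ^ 2 * #B ^ 2 / p + 2 ^ 12 * (s ^ ((5 : ℝ) / 4) * #B ^ ((3 : ℝ) / 2)) + s ^ 2 := by
  have rpow_pow {x : ℝ} (hx : 0 ≤ x) (y : ℝ) (n : ℕ) : (x ^ y) ^ n = x ^ (y * n) := by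
    rw [← Real.rpow_natCast, ← Real.rpow_mul hx]
  have one_le_s : 1 ≤ s := le_trans (mod_cast hB₀.card_pos) hBs
  have s_nonneg : 0 ≤ s := zero_le_one.trans one_le_s
  have q_pow_four : (s ^ ((1 : ℝ) / 4)) ^ 4 = s := by rw [rpow_pow s_nonneg]; norm_num
  have q_pow_five : (s ^ ((1 : ℝ) / 4)) ^ 5 = s ^ ((5 : ℝ) / 4) := by
    rw [rpow_pow s_nonneg]; norm_num
  have r_pow_two : ((#B : ℝ) ^ ((1 : ℝ) / 2)) ^ 2 = #B := by
    rw [rpow_pow (Nat.cast_nonneg _)]; norm_num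
  have r_pow_three : ((#B : ℝ) ^ ((1 : ℝ) / 2)) ^ 3 = #B ^ ((3 : ℝ) / 2) := by
    rw [rpow_pow (Nat.cast_nonneg _)]; norm_num
  have bound := sum_gridCount_transitionLine_le_of_pow hB
    (Real.one_le_rpow one_le_s (by norm_num)) (by positivity) r_pow_two.symm
    (by rwa [r_pow_two, q_pow_four]) (hU.trans_eq q_pow_four.symm)
  rwa [q_pow_four, q_pow_five, r_pow_three] at bound

lemma addEnergy_inv_inv_le (hA₀ : A.Nonempty) (hB₀ : B.Nonempty)
    (hA : (0 : ZMod p) ∉ A) (hB : (0 : ZMod p) ∉ B) :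
    (E[A⁻¹, B⁻¹] : ℝ) ≤ #(A + B) ^ 2 * #B ^ 2 / p +
      2 ^ 12 * (#(A + B) ^ ((5 : ℝ) / 4) * #B ^ ((3 : ℝ) / 2) + #(A + B) ^ 2) := by
  have card_A_le : (#A : ℝ) ≤ #(A + B) := mod_cast card_le_card_add_right hB₀
  have card_B_le : (#B : ℝ) ≤ #(A + B) := mod_cast card_le_card_add_left hA₀
  have reduction : (E[A⁻¹, B⁻¹] : ℝ) ≤ #A ^ 2 + #B * #(A + B) +
      ∑ x ∈ B.offDiag, (gridCount (A + B)⁻¹ (transitionLine x) : ℝ) :=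
    mod_cast addEnergy_inv_inv_le_add_sum_gridCount hA hB
  have off_diagonal := sum_gridCount_transitionLine_le hB hB₀ card_B_le
    (U := (A + B)⁻¹) (by rw [card_inv])
  have card_A_sq_le : (#A : ℝ) ^ 2 ≤ #(A + B) ^ 2 := by gcongr
  have card_B_mul_le : (#B : ℝ) * #(A + B) ≤ #(A + B) ^ 2 := by
    rw [sq]
    gcongr
  linarith [sq_nonneg (#(A + B) : ℝ)]

end EnergyOfReciprocals

open scoped Pointwise Combinatorics.Additive in
lemma sumSet_eq_add {p : ℕ} (A B : Finset (ZMod p)) : sumSet p A B = A + B := rfl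

open scoped Combinatorics.Additive in
lemma addEnergy2_eq_addEnergy {p : ℕ} (X Y : Finset (ZMod p)) : addEnergy2 p X Y = E[X, Y] := rfl

theorem stmt15 :
    ∃ C : ℝ,
      ∀ (p : ℕ), p.Prime → Odd p →
        ∀ K : ℝ, 1 ≤ K →
          ∀ A B : Finset (ZMod p), A.Nonempty → B.Nonempty →
            (0 : ZMod p) ∉ A → (0 : ZMod p) ∉ B →
            ((sumSet p A B).card : ℝ) ≤ K * A.card →
            (addEnergy2 p (A.image fun a => a⁻¹) (B.image fun b => b⁻¹) : ℝ) -
                K ^ 2 * (A.card : ℝ) ^ 2 * (B.card : ℝ) ^ 2 / p ≤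
              C * (K ^ ((5 : ℝ) / 4) * (A.card : ℝ) ^ ((5 : ℝ) / 4) * (B.card : ℝ) ^ ((3 : ℝ) / 2) +
                K ^ 2 * (A.card : ℝ) ^ 2) := by
  refine ⟨2 ^ 12, fun p hp _ K hK A B hA₀ hB₀ hA hB hAB => ?_⟩
  have : Fact p.Prime := ⟨hp⟩
  rw [sumSet_eq_add] at hAB
  rw [addEnergy2_eq_addEnergy, sub_le_iff_le_add', ← Real.mul_rpow (by positivity) (by positivity),
    ← mul_pow]
  refine (addEnergy_inv_inv_le hA₀ hB₀ hA hB).trans ?_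
  gcongr
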